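/- arXiv:math/0307002 — 2 statements merged into one kernel-verified Lean document; each statement's English description precedes it below -/
import Mathlib

section
/- Let S ∈ sp(n,ℂ) have purely real spectrum, Re Q_S ≥ 0, and nilpotent part N (in the Jordan decomposition S = D + N) with N² = 0. Write S = S₁ + iS₂ and D = D₁ + iD₂ with S₁, S₂, D₁, D₂ real matrices. Then S₁² = 0 and [S₁,S₂] = [D₁,D₂]. -/
/-!
Write `A̅` for the entrywise conjugate and `R = S + S̅ = 2 S₁`. If `S u = λ u` with `λ` real, then
`u* J S u = λ u* J u` is purely imaginary; since the Hermitian matrix `J R` is positive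
semidefinite, this forces `R u = 0`. The eigenvectors of `S` span `ker N`, so `ker N ⊆ ker R`, and
likewise `ker Nᵀ ⊆ ker Rᵀ`, because `J` carries eigenvectors of `S` to eigenvectors of `Sᵀ`. As
`N² = 0`, it follows that `R N = N R = 0`, and then `R² = 0`.

On the range of `N` we now have `S̅ = -S = -D`, which is diagonalizable there, so the nilpotent part
`N̅` of `S̅` vanishes on that range: `N̅ N = 0`. Hence `N` commutes with `S̅` and with `N̅`, and
expanding `D = S - N` gives `[D, D̅] = [S, S̅]`. Finally `[A, A̅] = -2i [A₁, A₂]`.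
-/

open MeasureTheory Complex Matrix

noncomputable section

/-- Index type for `2n`-dimensional (symplectic) vectors: `X`-coordinates `inl j`,
`Y`-coordinates `inr j`. -/
abbrev Idx (n : ℕ) := Fin n ⊕ Fin n

/-- The standard symplectic matrix `J = [[0, I],[-I, 0]]` over `ℂ`. -/
def Jmat (n : ℕ) : Matrix (Idx n) (Idx n) ℂ := Matrix.fromBlocks 0 1 (-1) 0

/-- The standard symplectic matrix `J = [[0, I],[-I, 0]]` over `ℝ`. -/
def JmatR (n : ℕ) : Matrix (Idx n) (Idx n) ℝ := Matrix.fromBlocks 0 1 (-1) 0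

/-- The standard symplectic form `σ(z,w) = ᵗz J w` on `ℂ^{2n}`. -/
def sigmaC (n : ℕ) (z w : Idx n → ℂ) : ℂ := z ⬝ᵥ (Jmat n).mulVec w

/-- The standard symplectic form on `ℝ^{2n}`. -/
def sigmaR (n : ℕ) (v w : Idx n → ℝ) : ℝ := v ⬝ᵥ (JmatR n).mulVec w

/-- Inclusion of real vectors into `ℂ^{2n}`. -/
def realVec (n : ℕ) (v : Idx n → ℝ) : Idx n → ℂ := fun i => (v i : ℂ)

/-- Complex conjugation on `ℂ^{2n}` relative to the real form `ℝ^{2n}`. -/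
def conjVec (n : ℕ) (z : Idx n → ℂ) : Idx n → ℂ := fun i => (starRingEnd ℂ) (z i)

/-- `S ∈ sp(n, ℂ)`, i.e. `σ(Sz, w) + σ(z, Sw) = 0` for all `z, w`. -/
def InSp (n : ℕ) (S : Matrix (Idx n) (Idx n) ℂ) : Prop := Sᵀ * Jmat n + Jmat n * S = 0

/-- `Re Q_S ≥ 0`: the real part of the quadratic form `Q_S(v) = σ(v, Sv)` is
positive semi-definite on `ℝ^{2n}`. -/
def RePosQ (n : ℕ) (S : Matrix (Idx n) (Idx n) ℂ) : Prop :=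
  ∀ v : Idx n → ℝ, 0 ≤ (sigmaC n (realVec n v) (S.mulVec (realVec n v))).re

/-- The generalized eigenspace `V_μ` of the matrix `S` for the eigenvalue `μ`. -/
def genEig (n : ℕ) (S : Matrix (Idx n) (Idx n) ℂ) (μ : ℂ) : Submodule ℂ (Idx n → ℂ) :=
  Module.End.maxGenEigenspace (Matrix.mulVecLin S) μ

/-- `V_r`: the sum of the generalized eigenspaces of `S` for real eigenvalues. -/
def Vreal (n : ℕ) (S : Matrix (Idx n) (Idx n) ℂ) : Submodule ℂ (Idx n → ℂ) :=
  ⨆ lam : ℝ, genEig n S (lam : ℂ)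

/-- `V_i`: the sum of the generalized eigenspaces of `S` for non-real eigenvalues. -/
def Vimag (n : ℕ) (S : Matrix (Idx n) (Idx n) ℂ) : Submodule ℂ (Idx n → ℂ) :=
  ⨆ μ : {z : ℂ // z.im ≠ 0}, genEig n S (μ : ℂ)

/-- `Sr` is the "real part" `S_r` of `S`: it agrees with `S` on `V_r` and vanishes on `V_i`. -/
def IsRealPart (n : ℕ) (S Sr : Matrix (Idx n) (Idx n) ℂ) : Prop :=
  (∀ v ∈ Vreal n S, Sr.mulVec v = S.mulVec v) ∧ ∀ v ∈ Vimag n S, Sr.mulVec v = 0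

/-- `Si` is the "imaginary part" `S_i` of `S`: it vanishes on `V_r` and agrees with `S`
on `V_i`. -/
def IsImagPart (n : ℕ) (S Si : Matrix (Idx n) (Idx n) ℂ) : Prop :=
  (∀ v ∈ Vreal n S, Si.mulVec v = 0) ∧ ∀ v ∈ Vimag n S, Si.mulVec v = S.mulVec v

/-- Condition (R): `V_λ ⊕ V_{−λ}` is invariant under complex conjugation for every
real `λ ≠ 0`. -/
def CondR (n : ℕ) (S : Matrix (Idx n) (Idx n) ℂ) : Prop :=
  ∀ lam : ℝ, lam ≠ 0 →
    ∀ z ∈ genEig n S (lam : ℂ) ⊔ genEig n S (-(lam : ℂ)),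
      conjVec n z ∈ genEig n S (lam : ℂ) ⊔ genEig n S (-(lam : ℂ))

/-- `ν = Σ_j ν_j`: the sum of the imaginary parts of the eigenvalues of `S` lying in the
upper half plane, counted with multiplicity. -/
def nuTotal (n : ℕ) (S : Matrix (Idx n) (Idx n) ℂ) : ℝ :=
  (S.charpoly.roots.map (fun z => max z.im 0)).sum

/-- `S_i ≠ 0`, i.e. `S` has at least one non-real eigenvalue. -/
def HasNonrealEig (n : ℕ) (S : Matrix (Idx n) (Idx n) ℂ) : Prop :=
  ∃ z ∈ S.charpoly.roots, z.im ≠ 0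

/-- Semisimple (= diagonalizable over `ℂ`) matrix. -/
def IsSemisimpleMat (n : ℕ) (D : Matrix (Idx n) (Idx n) ℂ) : Prop :=
  ∃ (P : Matrix (Idx n) (Idx n) ℂ) (d : Idx n → ℂ), IsUnit P ∧ D = P * Matrix.diagonal d * P⁻¹

/-- `S = D + N` is the Jordan decomposition of `S`: `D` semisimple, `N` nilpotent,
`DN = ND`. -/
def IsJordanDecomp (n : ℕ) (S D N : Matrix (Idx n) (Idx n) ℂ) : Prop :=
  S = D + N ∧ IsSemisimpleMat n D ∧ IsNilpotent N ∧ D * N = N * D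

section Endomorphisms

open Module.End

lemma eigenspace_add_le_ker {R M : Type*} [CommRing R] [AddCommGroup M] [Module R M]
    {d n : Module.End R M} (hd : d.IsFinitelySemisimple) (hn : IsNilpotent n) (hdn : Commute d n)
    (μ : R) : eigenspace (d + n) μ ≤ LinearMap.ker n := by
  intro v hv
  have hdv : d v = μ • v :=
    apply_eq_of_mem_of_comm_of_isFinitelySemisimple_of_isNil hv
      ((Commute.refl d).add_left hdn.symm) hd (by rwa [add_sub_cancel_left])
  rw [mem_eigenspace_iff, LinearMap.add_apply, hdv, add_eq_left] at hv
  exact hv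

lemma ker_le_iSup_eigenspace_add {K V : Type*} [Field K] [AddCommGroup V] [Module K V]
    [FiniteDimensional K V] {d n : Module.End K V} (hd : ⨆ μ, eigenspace d μ = ⊤)
    (hdn : Commute d n) : LinearMap.ker n ≤ ⨆ μ, eigenspace (d + n) μ := by
  have hker : ∀ v ∈ LinearMap.ker n, d v ∈ LinearMap.ker n := fun v hv => by
    rw [LinearMap.mem_ker, ← Module.End.mul_apply, ← hdn.eq, Module.End.mul_apply,
      LinearMap.mem_ker.1 hv, map_zero]
  calc LinearMap.ker n = LinearMap.ker n ⊓ ⨆ μ, eigenspace d μ := by rw [hd, inf_top_eq]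
    _ = ⨆ μ, LinearMap.ker n ⊓ eigenspace d μ := Submodule.inf_iSup_genEigenspace hker 1
    _ ≤ ⨆ μ, eigenspace (d + n) μ := iSup_mono fun μ v ⟨hnv, hdv⟩ => by
      rw [mem_eigenspace_iff, LinearMap.add_apply, LinearMap.mem_ker.1 hnv, add_zero]
      exact mem_eigenspace_iff.1 hdv

end Endomorphisms

section SemisimpleMatrices

variable {ι : Type*} [Fintype ι] [DecidableEq ι]

lemma isSemisimple_toLin'_conj {R : Type*} [CommRing R] {A P : Matrix ι ι R} (hP : IsUnit P)
    (hA : Module.End.IsSemisimple (toLin' A)) :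
    Module.End.IsSemisimple (toLin' (P * A * P⁻¹)) := by
  let e := P.toLinearEquiv' hP.invertible
  refine (LinearEquiv.isSemisimple_iff (toLin' A) (toLin' (P * A * P⁻¹)) e ?_).1 hA
  rw [toLinearEquiv'_apply, ← toLin'_mul, ← toLin'_mul, mul_assoc,
    nonsing_inv_mul _ ((isUnit_iff_isUnit_det P).1 hP), mul_one]

variable {K : Type*} [Field K] {A : Matrix ι ι K}

lemma isSemisimple_toLin'_iff_squarefree_minpoly :
    Module.End.IsSemisimple (toLin' A) ↔ Squarefree (minpoly K A) := by
  rw [← minpoly_toLin']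
  exact ⟨fun h => h.minpoly_squarefree, fun h =>
    Module.End.isSemisimple_of_squarefree_aeval_eq_zero h (minpoly.aeval K _)⟩

lemma isSemisimple_toLin'_diagonal (d : ι → K) :
    Module.End.IsSemisimple (toLin' (diagonal d)) := by
  classical
  let p : Polynomial K := ∏ μ ∈ Finset.univ.image d, (.X - .C μ)
  have hp : Squarefree p :=
    (Polynomial.separable_prod_X_sub_C_iff'.2 fun _ _ _ _ h => h).squarefree
  have hroot (i : ι) : p.eval (d i) = 0 := by
    rw [Polynomial.eval_prod]
    exact Finset.prod_eq_zero (Finset.mem_image_of_mem d (Finset.mem_univ i)) (by simp)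
  have hdiag : Polynomial.aeval (diagonalAlgHom K d) p = 0 := by
    rw [Polynomial.aeval_algHom_apply, Polynomial.aeval_pi]
    ext i j
    simp [diagonal_apply, hroot, Polynomial.aeval_def]
  exact isSemisimple_toLin'_iff_squarefree_minpoly.2 (hp.squarefree_of_dvd (minpoly.dvd K _ hdiag))

lemma isSemisimple_toLin'_transpose (hA : Module.End.IsSemisimple (toLin' A)) :
    Module.End.IsSemisimple (toLin' Aᵀ) := by
  rw [isSemisimple_toLin'_iff_squarefree_minpoly] at hA ⊢
  refine hA.squarefree_of_dvd (minpoly.dvd K _ (MulOpposite.op_injective ?_))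
  have h : Polynomial.aeval (transposeAlgEquiv ι K K A) (minpoly K A) = 0 := by
    rw [Polynomial.aeval_algHom_apply, minpoly.aeval, map_zero]
  rwa [transposeAlgEquiv_apply, Polynomial.aeval_op_apply] at h

lemma mul_eq_zero_of_eigenspace_le_ker [IsAlgClosed K] {D N R Y : Matrix ι ι K}
    (hD : Module.End.IsSemisimple (toLin' D)) (hDN : Commute D N)
    (hR : ∀ μ, Module.End.eigenspace (toLin' (D + N)) μ ≤ LinearMap.ker (toLin' R))
    (hY : N * Y = 0) : R * Y = 0 := by
  have hDN' : Commute (toLin' D) (toLin' N) := hDN.map toLinAlgEquiv'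
  have hker : LinearMap.ker (toLin' N) ≤ LinearMap.ker (toLin' R) :=
    (ker_le_iSup_eigenspace_add hD.iSup_eigenspace_eq_top hDN').trans <| by
      simpa only [map_add, iSup_le_iff] using hR
  refine ext_of_mulVec_single fun j => ?_
  have hj : toLin' N (Y *ᵥ Pi.single j 1) = 0 := by
    rw [toLin'_apply, mulVec_mulVec, hY, zero_mulVec]
  rw [← mulVec_mulVec, zero_mulVec]
  exact hker hj

end SemisimpleMatrices

section SkewAdjoint

variable {ι : Type*} [Fintype ι] [DecidableEq ι]

lemma eigenspace_transpose_le_ker_transpose {k : Type*} [CommRing k] {J S R : Matrix ι ι k}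
    (hJ : IsUnit J) (hS : J.IsSkewAdjoint S) (hR : J.IsSkewAdjoint R)
    (hSR : ∀ μ, Module.End.eigenspace (toLin' S) μ ≤ LinearMap.ker (toLin' R)) (μ : k) :
    Module.End.eigenspace (toLin' Sᵀ) μ ≤ LinearMap.ker (toLin' Rᵀ) := by
  intro u hu
  obtain ⟨v, rfl⟩ := mulVec_surjective_iff_isUnit.2 hJ u
  rw [Module.End.mem_eigenspace_iff, toLin'_apply, mulVec_mulVec, hS, ← mulVec_mulVec,
    ← mulVec_smul] at hu
  have hSv : S *ᵥ v = (-μ) • v := by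
    rw [neg_smul, ← mulVec_injective_of_isUnit hJ hu, neg_mulVec, neg_neg]
  have hRv : R *ᵥ v = 0 := hSR (-μ) (Module.End.mem_eigenspace_iff.2 hSv)
  rw [LinearMap.mem_ker, toLin'_apply, mulVec_mulVec, hR, ← mulVec_mulVec, neg_mulVec, hRv,
    neg_zero, mulVec_zero]

end SkewAdjoint

section ComplexForms

open scoped ComplexOrder

variable {ι : Type*} [Fintype ι] {A : Matrix ι ι ℂ}

lemma star_dotProduct_conjTranspose_mulVec {R : Type*} [CommSemiring R] [StarRing R]
    (A : Matrix ι ι R) (z : ι → R) :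
    star z ⬝ᵥ Aᴴ *ᵥ z = star (star z ⬝ᵥ A *ᵥ z) := by
  rw [star_dotProduct, star_mulVec, conjTranspose_conjTranspose, dotProduct_mulVec,
    dotProduct_comm]

lemma re_star_dotProduct_mulVec_eq_zero (hA : Aᴴ = -A) (z : ι → ℂ) :
    (star z ⬝ᵥ A *ᵥ z).re = 0 := by
  have h := congrArg re (star_dotProduct_conjTranspose_mulVec A z)
  rw [hA, neg_mulVec, dotProduct_neg, neg_re, Complex.star_def, conj_re] at h
  linarith

lemma star_dotProduct_mulVec_of_isSymm (hA : A.IsSymm) (z : ι → ℂ) :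
    star z ⬝ᵥ A *ᵥ z = (ofReal ∘ re ∘ z) ⬝ᵥ A *ᵥ (ofReal ∘ re ∘ z) +
      (ofReal ∘ im ∘ z) ⬝ᵥ A *ᵥ (ofReal ∘ im ∘ z) := by
  set x : ι → ℂ := ofReal ∘ re ∘ z with hx
  set y : ι → ℂ := ofReal ∘ im ∘ z with hy
  have hz : z = x + I • y := by
    ext i
    simp [hx, hy, mul_comm I, re_add_im]
  have hsz : star z = x - I • y := by
    ext i
    apply Complex.ext <;> simp [hx, hy]
  have hxy : x ⬝ᵥ A *ᵥ y = y ⬝ᵥ A *ᵥ x := by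
    rw [dotProduct_mulVec, ← mulVec_transpose, hA.eq, dotProduct_comm]
  rw [hsz, hz]
  simp only [mulVec_add, mulVec_smul, dotProduct_add, sub_dotProduct, smul_dotProduct,
    dotProduct_smul, smul_eq_mul, hxy]
  linear_combination (-(y ⬝ᵥ A *ᵥ y)) * I_mul_I

lemma posSemidef_add_conjTranspose_of_isSymm (hA : A.IsSymm)
    (hpos : ∀ x : ι → ℝ, 0 ≤ ((ofReal ∘ x) ⬝ᵥ A *ᵥ (ofReal ∘ x)).re) :
    (A + Aᴴ).PosSemidef := by
  refine .of_dotProduct_mulVec_nonneg (isHermitian_add_transpose_self A) fun z => ?_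
  rw [add_mulVec, dotProduct_add, star_dotProduct_conjTranspose_mulVec, Complex.star_def, add_conj,
    star_dotProduct_mulVec_of_isSymm hA, add_re]
  exact_mod_cast mul_nonneg zero_le_two (add_nonneg (hpos (re ∘ z)) (hpos (im ∘ z)))

lemma add_conjTranspose_mulVec_eq_zero (hA : A.IsSymm)
    (hpos : ∀ x : ι → ℝ, 0 ≤ ((ofReal ∘ x) ⬝ᵥ A *ᵥ (ofReal ∘ x)).re) {z : ι → ℂ}
    (hz : (star z ⬝ᵥ A *ᵥ z).re = 0) : (A + Aᴴ) *ᵥ z = 0 := by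
  refine ((posSemidef_add_conjTranspose_of_isSymm hA hpos).dotProduct_mulVec_zero_iff z).1 ?_
  rw [add_mulVec, dotProduct_add, star_dotProduct_conjTranspose_mulVec, Complex.star_def, add_conj,
    hz, mul_zero, ofReal_zero]

end ComplexForms

section Conjugation

variable {ι : Type*} [Fintype ι] [DecidableEq ι]

/-- Entrywise complex conjugation of square matrices, bundled as a ring homomorphism. -/
abbrev conjMatrix : Matrix ι ι ℂ →+* Matrix ι ι ℂ := (starRingEnd ℂ).mapMatrix

/-- The inclusion of real into complex square matrices, bundled as a ring homomorphism. -/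
abbrev complexify : Matrix ι ι ℝ →+* Matrix ι ι ℂ := ofRealHom.mapMatrix

lemma complexify_injective : Function.Injective (complexify : Matrix ι ι ℝ →+* Matrix ι ι ℂ) :=
  map_injective ofReal_injective

lemma conjMatrix_conjMatrix (A : Matrix ι ι ℂ) : conjMatrix (conjMatrix A) = A := by
  ext
  simp

lemma conjMatrix_mulVec (A : Matrix ι ι ℂ) (v : ι → ℂ) :
    conjMatrix A *ᵥ v = star (A *ᵥ star v) := by
  ext i
  simp [mulVec, dotProduct]

lemma re_add_I_smul_im (A : Matrix ι ι ℂ) :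
    complexify (A.map re) + I • complexify (A.map im) = A := by
  ext i j
  simp [mul_comm I, re_add_im]

lemma re_sub_I_smul_im (A : Matrix ι ι ℂ) :
    complexify (A.map re) - I • complexify (A.map im) = conjMatrix A := by
  ext i j
  apply Complex.ext <;> simp

lemma add_conjMatrix (A : Matrix ι ι ℂ) : A + conjMatrix A = (2 : ℂ) • complexify (A.map re) := by
  rw [← re_sub_I_smul_im]
  nth_rw 1 [← re_add_I_smul_im A]
  module

lemma lie_conjMatrix (A : Matrix ι ι ℂ) :
    ⁅A, conjMatrix A⁆ = (-2 * I) • complexify ⁅A.map re, A.map im⁆ := by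
  have h : ⁅A, conjMatrix A⁆ = ⁅complexify (A.map re) + I • complexify (A.map im),
      complexify (A.map re) - I • complexify (A.map im)⁆ := by
    rw [re_add_I_smul_im, re_sub_I_smul_im]
  rw [h]
  simp only [Ring.lie_def, map_sub, map_mul, add_mul, sub_mul, mul_add, mul_sub,
    smul_mul_assoc, mul_smul_comm]
  module

lemma map_re_mul_self_eq_zero_iff {A : Matrix ι ι ℂ} :
    (A + conjMatrix A) * (A + conjMatrix A) = 0 ↔ A.map re * A.map re = 0 := by
  rw [add_conjMatrix, smul_mul_smul_comm, smul_eq_zero_iff_right (by norm_num), ← map_mul,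
    map_eq_zero_iff _ complexify_injective]

lemma lie_conjMatrix_eq_iff {A B : Matrix ι ι ℂ} :
    ⁅A, conjMatrix A⁆ = ⁅B, conjMatrix B⁆ ↔ ⁅A.map re, A.map im⁆ = ⁅B.map re, B.map im⁆ := by
  rw [lie_conjMatrix, lie_conjMatrix, smul_right_inj (by simp [I_ne_zero]),
    complexify_injective.eq_iff]

end Conjugation

section RealSymplectic

variable {ι : Type*} [Fintype ι] [DecidableEq ι] {J S : Matrix ι ι ℂ}

/-- `J` is the matrix of a symplectic form on real vectors (nondegenerate and skew-symmetric),
regarded as a complex matrix so as to act on the complexification. -/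
structure IsRealSymplectic (J : Matrix ι ι ℂ) : Prop where
  isUnit : IsUnit J
  transpose_eq : Jᵀ = -J
  conj_eq : conjMatrix J = J

namespace IsRealSymplectic

lemma conjTranspose_eq (hJ : IsRealSymplectic J) : Jᴴ = -J := by
  change conjMatrix Jᵀ = -J
  rw [hJ.transpose_eq, map_neg, hJ.conj_eq]

lemma isSkewAdjoint_conjMatrix (hJ : IsRealSymplectic J) (hS : J.IsSkewAdjoint S) :
    J.IsSkewAdjoint (conjMatrix S) := by
  have h := congrArg conjMatrix (show Sᵀ * J = J * -S from hS)
  rwa [map_mul, map_mul, map_neg, hJ.conj_eq] at h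

lemma isSkewAdjoint_add_conjMatrix (hJ : IsRealSymplectic J) (hS : J.IsSkewAdjoint S) :
    J.IsSkewAdjoint (S + conjMatrix S) :=
  (mem_skewAdjointMatricesSubmodule J _).1 <| add_mem
    ((mem_skewAdjointMatricesSubmodule J _).2 hS)
    ((mem_skewAdjointMatricesSubmodule J _).2 (hJ.isSkewAdjoint_conjMatrix hS))

lemma isSymm_mul (hJ : IsRealSymplectic J) (hS : J.IsSkewAdjoint S) : (J * S).IsSymm := by
  rw [IsSymm, transpose_mul, hJ.transpose_eq, mul_neg, hS, mul_neg, neg_neg]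

lemma mul_add_conjTranspose (hJ : IsRealSymplectic J) (hS : J.IsSkewAdjoint S) :
    J * S + (J * S)ᴴ = J * (S + conjMatrix S) := by
  have h : (J * S)ᴴ = conjMatrix (J * S) := congrArg conjMatrix (hJ.isSymm_mul hS)
  rw [h, map_mul, hJ.conj_eq, mul_add]

lemma eigenspace_le_ker_add_conjMatrix (hJ : IsRealSymplectic J) (hS : J.IsSkewAdjoint S)
    (hreal : ∀ z ∈ S.charpoly.roots, z.im = 0)
    (hpos : ∀ x : ι → ℝ, 0 ≤ ((ofReal ∘ x) ⬝ᵥ J *ᵥ S *ᵥ (ofReal ∘ x)).re) (μ : ℂ) :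
    Module.End.eigenspace (toLin' S) μ ≤ LinearMap.ker (toLin' (S + conjMatrix S)) := by
  intro u hu
  rcases eq_or_ne u 0 with rfl | hu0
  · exact zero_mem _
  have hμ : μ.im = 0 := hreal μ <| (Polynomial.mem_roots S.charpoly_monic.ne_zero).2 <| by
    rw [← charpoly_toLin', ← Module.End.hasEigenvalue_iff_isRoot_charpoly]
    exact Module.End.hasEigenvalue_of_hasEigenvector ⟨hu, hu0⟩
  have hSu : S *ᵥ u = μ • u := Module.End.mem_eigenspace_iff.1 hu
  have him : (star u ⬝ᵥ (J * S) *ᵥ u).re = 0 := by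
    rw [← mulVec_mulVec, hSu, mulVec_smul, dotProduct_smul, smul_eq_mul, mul_re, hμ,
      re_star_dotProduct_mulVec_eq_zero hJ.conjTranspose_eq, mul_zero, zero_mul, sub_zero]
  simp only [mulVec_mulVec] at hpos
  have hzero := add_conjTranspose_mulVec_eq_zero (hJ.isSymm_mul hS) hpos him
  rw [hJ.mul_add_conjTranspose hS, ← mulVec_mulVec] at hzero
  exact mulVec_injective_of_isUnit hJ.isUnit (hzero.trans (mulVec_zero J).symm)

end IsRealSymplectic

end RealSymplectic

section JordanDecomposition

variable {ι : Type*} [Fintype ι] [DecidableEq ι] {D N : Matrix ι ι ℂ}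

lemma conjMatrix_nilpotent_mul_eq_zero (hD : Module.End.IsSemisimple (toLin' D)) (hDN : Commute D N)
    (hN : N * N = 0) (hRN : (D + N + conjMatrix (D + N)) * N = 0) : conjMatrix N * N = 0 := by
  have hDN' : Commute (toLin' D) (toLin' N) := hDN.map toLinAlgEquiv'
  have hN' : IsNilpotent (toLin' N) := ⟨2, by
    rw [pow_two, Module.End.mul_eq_comp, ← toLin'_mul, hN, map_zero]⟩
  have hconj : conjMatrix (D + N) * N = -(N * D) := by
    rw [add_mul, add_mul D N N, hN, add_zero, hDN.eq] at hRN
    exact eq_neg_of_add_eq_zero_right hRN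
  suffices h : ⨆ μ, Module.End.eigenspace (toLin' D) μ ≤
      LinearMap.ker (toLin' (conjMatrix N * N)) by
    rw [hD.iSup_eigenspace_eq_top, top_le_iff, LinearMap.ker_eq_top] at h
    exact (map_eq_zero_iff _ toLin'.injective).1 h
  refine iSup_le fun μ v hv => ?_
  have hDv : D *ᵥ v = μ • v := Module.End.mem_eigenspace_iff.1 hv
  have hNv : conjMatrix (D + N) *ᵥ N *ᵥ v = -μ • N *ᵥ v := by
    rw [mulVec_mulVec, hconj, neg_mulVec, ← mulVec_mulVec, hDv, mulVec_smul, neg_smul]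
  have hstar : star (N *ᵥ v) ∈ Module.End.eigenspace (toLin' D + toLin' N) (star (-μ)) := by
    rw [Module.End.mem_eigenspace_iff, ← map_add, toLin'_apply, ← star_smul, ← hNv,
      conjMatrix_mulVec, star_star]
  have hker : N *ᵥ star (N *ᵥ v) = 0 :=
    eigenspace_add_le_ker hD.isFinitelySemisimple hN' hDN' _ hstar
  rw [LinearMap.mem_ker, toLin'_apply, ← mulVec_mulVec, conjMatrix_mulVec, hker, star_zero]

lemma lie_conjMatrix_add_eq (hD : Module.End.IsSemisimple (toLin' D)) (hDN : Commute D N)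
    (hN : N * N = 0) (hRN : (D + N + conjMatrix (D + N)) * N = 0)
    (hNR : N * (D + N + conjMatrix (D + N)) = 0) :
    ⁅D + N, conjMatrix (D + N)⁆ = ⁅D, conjMatrix D⁆ := by
  have hNN : conjMatrix N * N = 0 := conjMatrix_nilpotent_mul_eq_zero hD hDN hN hRN
  have hNN' : N * conjMatrix N = 0 := by
    have h := congrArg conjMatrix hNN
    rwa [map_mul, conjMatrix_conjMatrix, map_zero] at h
  have hconjD_N : conjMatrix D * N = -(D * N) := by
    rw [map_add, add_mul, add_mul, add_mul, hN, hNN, add_zero, add_zero] at hRN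
    exact eq_neg_of_add_eq_zero_right hRN
  have hN_conjD : N * conjMatrix D = -(N * D) := by
    rw [map_add, mul_add, mul_add, mul_add, hN, hNN', add_zero, add_zero] at hNR
    exact eq_neg_of_add_eq_zero_right hNR
  have hcomm : N * conjMatrix D = conjMatrix D * N := by rw [hN_conjD, hconjD_N, hDN.eq]
  have hcomm' : conjMatrix N * D = D * conjMatrix N := by
    have h := congrArg conjMatrix hcomm
    rwa [map_mul, map_mul, conjMatrix_conjMatrix] at h
  rw [Ring.lie_def, Ring.lie_def, map_add, add_mul, mul_add, mul_add, add_mul, mul_add, mul_add,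
    hNN, hNN', hcomm, hcomm']
  abel

end JordanDecomposition

section StandardForm

variable {n : ℕ}

lemma isRealSymplectic_Jmat : IsRealSymplectic (Jmat n) := by
  have h : Jmat n = -Matrix.J (Fin n) ℂ := by simp [Jmat, Matrix.J, fromBlocks_neg]
  rw [h]
  refine ⟨((isUnit_iff_isUnit_det _).2 (isUnit_det_J _ _)).neg, ?_, ?_⟩
  · rw [transpose_neg, J_transpose]
  · rw [map_neg]
    exact congrArg _ (map_J _ _)

lemma InSp.isSkewAdjoint {S : Matrix (Idx n) (Idx n) ℂ} (hS : InSp n S) :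
    (Jmat n).IsSkewAdjoint S := by
  rw [Matrix.IsSkewAdjoint, Matrix.IsAdjointPair, mul_neg]
  exact eq_neg_of_add_eq_zero_left hS

lemma IsSemisimpleMat.isSemisimple_toLin' {D : Matrix (Idx n) (Idx n) ℂ}
    (hD : IsSemisimpleMat n D) : Module.End.IsSemisimple (toLin' D) := by
  obtain ⟨P, d, hP, rfl⟩ := hD
  exact isSemisimple_toLin'_conj hP (isSemisimple_toLin'_diagonal d)

end StandardForm

theorem statement8_general {ι : Type*} [Fintype ι] [DecidableEq ι] {J S D N : Matrix ι ι ℂ}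
    (hJ : IsRealSymplectic J) (hS : J.IsSkewAdjoint S) (hreal : ∀ z ∈ S.charpoly.roots, z.im = 0)
    (hpos : ∀ x : ι → ℝ, 0 ≤ ((ofReal ∘ x) ⬝ᵥ J *ᵥ S *ᵥ (ofReal ∘ x)).re)
    (hSDN : S = D + N) (hD : Module.End.IsSemisimple (toLin' D)) (hDN : Commute D N)
    (hN : N * N = 0) :
    S.map re * S.map re = 0 ∧ ⁅S.map re, S.map im⁆ = ⁅D.map re, D.map im⁆ := by
  subst hSDN
  set R := D + N + conjMatrix (D + N)
  have hker (μ : ℂ) : Module.End.eigenspace (toLin' (D + N)) μ ≤ LinearMap.ker (toLin' R) :=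
    hJ.eigenspace_le_ker_add_conjMatrix hS hreal hpos μ
  have hkerT (μ : ℂ) : Module.End.eigenspace (toLin' (Dᵀ + Nᵀ)) μ ≤ LinearMap.ker (toLin' Rᵀ) :=
    eigenspace_transpose_le_ker_transpose hJ.isUnit hS (hJ.isSkewAdjoint_add_conjMatrix hS) hker μ
  have hDNT : Commute Dᵀ Nᵀ := by
    rw [commute_iff_eq, ← transpose_mul, ← transpose_mul, hDN.eq]
  have hRN : R * N = 0 := mul_eq_zero_of_eigenspace_le_ker hD hDN hker hN
  have hNR : N * R = 0 := transpose_injective <| by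
    rw [transpose_mul, transpose_zero]
    exact mul_eq_zero_of_eigenspace_le_ker (isSemisimple_toLin'_transpose hD) hDNT hkerT
      (by rw [← transpose_mul, hN, transpose_zero])
  have hRR : R * R = 0 := mul_eq_zero_of_eigenspace_le_ker hD hDN hker hNR
  exact ⟨map_re_mul_self_eq_zero_iff.1 hRR,
    lie_conjMatrix_eq_iff.1 (lie_conjMatrix_add_eq hD hDN hN hRN hNR)⟩

/-- if `S ∈ sp(n,ℂ)` has purely real spectrum, `Re Q_S ≥ 0` and `N² = 0`,
then `S₁² = 0` and `[S₁, S₂] = [D₁, D₂]`. -/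
theorem statement8 (n : ℕ) (S D N : Matrix (Idx n) (Idx n) ℂ)
    (hS : InSp n S) (hreal : ∀ z ∈ S.charpoly.roots, z.im = 0)
    (hpos : RePosQ n S) (hJ : IsJordanDecomp n S D N) (hN2 : N * N = 0) :
    (S.map Complex.re) * (S.map Complex.re) = 0 ∧
    (S.map Complex.re) * (S.map Complex.im) - (S.map Complex.im) * (S.map Complex.re) =
      (D.map Complex.re) * (D.map Complex.im) - (D.map Complex.im) * (D.map Complex.re) := by
  obtain ⟨hSDN, hD, -, hDN⟩ := hJ
  exact statement8_general isRealSymplectic_Jmat hS.isSkewAdjoint hreal hpos hSDN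
    hD.isSemisimple_toLin' hDN hN2
end
end

section
/- Let μ ∈ ℝ∖{0} and let S = −AJ ∈ sp(n,ℂ) with Re Q_S ≥ 0 (equivalently Re A positive semidefinite). Consider the μ-twisted operator L̃^μ_S := Σ_{j,k=1}^{2n} a_{jk} Ṽ_j^μ Ṽ_k^μ on L²(ℝ^{2n}) with its maximal domain, where Ṽ_j^μ = ∂_{x_j} − πiμ y_j and Ṽ_{n+j}^μ = ∂_{y_j} + πiμ x_j for j = 1,…,n. Then L̃^μ_S and its adjoint L̃^μ_{S̄} (the maximal operator associated with the conjugate matrix Ā) are dissipative, i.e. Re ⟨L̃^μ_S f, f⟩_{L²} ≤ 0 for every f in the maximal domain (and likewise for L̃^μ_{S̄}); consequently L̃^μ_S generates a contraction semigroup exp(t L̃^μ_S), t ≥ 0, on L²(ℝ^{2n}). -/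
open MeasureTheory Complex Matrix

noncomputable section

/-- The underlying space `ℝ^{2n} = ℝ^n × ℝ^n` of the twisted (partial Fourier
transformed) picture. -/
abbrev Pl (n : ℕ) := (Fin n → ℝ) × (Fin n → ℝ)

/-- The `μ`-twisted vector fields `Ṽ_j^μ`: `X̃_j^μ = ∂_{x_j} - πiμ y_j` and
`Ỹ_j^μ = ∂_{y_j} + πiμ x_j`. -/
def tVop (n : ℕ) (μ : ℝ) : Idx n → (Pl n → ℂ) → Pl n → ℂ
  | Sum.inl j => fun f p =>
      fderiv ℝ f p (Pi.single j 1, 0) -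
        (Real.pi : ℂ) * Complex.I * (μ : ℂ) * (p.2 j : ℂ) * f p
  | Sum.inr j => fun f p =>
      fderiv ℝ f p (0, Pi.single j 1) +
        (Real.pi : ℂ) * Complex.I * (μ : ℂ) * (p.1 j : ℂ) * f p

/-- The `μ`-twisted operator `L̃^μ_A = Σ_{j,k} a_{jk} Ṽ_j^μ Ṽ_k^μ`. -/
def tLop (n : ℕ) (A : Matrix (Idx n) (Idx n) ℂ) (μ : ℝ) (f : Pl n → ℂ) : Pl n → ℂ :=
  fun p => ∑ j, ∑ k, A j k * tVop n μ j (tVop n μ k f) p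

/-- `g = L̃^μ_A f` in the sense of distributions: for every test function `φ`,
`∫ f ⋅ (L̃^μ_A)ᵗ φ = ∫ g φ`, where the formal transpose of `L̃^μ_A` (for symmetric `A`)
is `L̃^{-μ}_A`.  Thus `f` belongs to the maximal domain of `L̃^μ_A` on `L²` precisely
when such a `g ∈ L²` exists. -/
def WeakTL (n : ℕ) (A : Matrix (Idx n) (Idx n) ℂ) (μ : ℝ) (f g : Pl n → ℂ) : Prop :=
  ∀ φ : Pl n → ℂ, ContDiff ℝ (⊤ : ℕ∞) φ → HasCompactSupport φ →
    ∫ x, f x * tLop n A (-μ) φ x = ∫ x, g x * φ x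

/-!
Write `V_w = ∂_w + i ω(·, w)` for the twisted derivatives of an antisymmetric form `ω`, so that
`L^ω = ∑ a_jk V_j V_k`. The twisted convolutions `T_ψ f = ∫ ψ(u) e^{-i ω(·, u)} f(· - u) du` turn
derivatives of the kernel into derivatives of the function: `T_{L^{-ω} ψ} f = T_ψ (L^ω f)` for every
`f` in the maximal domain, while `ψ ↦ T_{V_w ψ} f` with the opposite sign of the twist is formally
skew: `⟪T_{V_w χ} f, T_ψ f⟫ = -⟪T_χ f, T_{V_w ψ} f⟫`. The latter gives
`Re ⟪T_ψ f, T_{L^ω ψ} f⟫ = -Re ∑ a_jk ⟪T_{V_j ψ} f, T_{V_k ψ} f⟫ ≤ 0`. The difference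
`L^ω - L^{-ω}` is a first order operator that commutes with the dilations `ψ ↦ ψ_ε` and has range in
the functions of integral zero, so for an approximate identity `ψ_ε` both `T_{L^ω ψ_ε} f` and
`T_{L^{-ω} ψ_ε} f` tend to `L^ω f`, and `Re ⟪f, L^ω f⟫ ≤ 0` follows in the limit.

The adjoint of the maximal operator of `A` is contained in the maximal operator of the conjugate
matrix, hence is dissipative as well. A closed dissipative operator with dissipative adjoint is
m-dissipative, and the exponentials of its Yosida approximations converge to the semigroup.
-/

open Filter Topology
open scoped Distributions ComplexConjugate

/-! ### Contraction semigroups generated by m-dissipative graphs -/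

section StrongConvergence

variable {𝕜 X Y ι : Type*} [NontriviallyNormedField 𝕜]
  [SeminormedAddCommGroup X] [NormedSpace 𝕜 X] [SeminormedAddCommGroup Y] [NormedSpace 𝕜 Y]
  {l : Filter ι} {C : ℝ} {D : Set X}

theorem tendsto_apply_of_tendsto_on_dense {U : ι → X →L[𝕜] Y} {S : X →L[𝕜] Y}
    (hU : ∀ᶠ i in l, ‖U i‖ ≤ C) (hD : Dense D)
    (h : ∀ x ∈ D, Tendsto (fun i => U i x) l (𝓝 (S x))) (x : X) :
    Tendsto (fun i => U i x) l (𝓝 (S x)) := by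
  rw [Metric.tendsto_nhds]
  intro ε hε
  set M : ℝ := max C 0 + ‖S‖ + 1
  have : 0 < M := by positivity
  obtain ⟨y, hyD, hxy⟩ := Metric.dense_iff.1 hD x (ε / (2 * M)) (by positivity)
  rw [Metric.mem_ball, dist_comm, dist_eq_norm, lt_div_iff₀ (by positivity)] at hyD
  filter_upwards [hU, Metric.tendsto_nhds.1 (h y hxy) (ε / 2) (by positivity)] with i hCi hi
  rw [dist_eq_norm] at hi ⊢
  calc ‖U i x - S x‖ = ‖U i (x - y) + (U i y - S y) - S (x - y)‖ := by
        rw [map_sub, map_sub]; congr 1; abel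
    _ ≤ ‖U i (x - y)‖ + ‖U i y - S y‖ + ‖S (x - y)‖ := norm_sub_le_of_le (norm_add_le _ _) le_rfl
    _ ≤ max C 0 * ‖x - y‖ + ‖U i y - S y‖ + ‖S‖ * ‖x - y‖ := by
        gcongr
        exacts [(U i).le_of_opNorm_le (hCi.trans (le_max_left _ _)) _, S.le_opNorm _]
    _ ≤ M * ‖x - y‖ + ‖U i y - S y‖ := by
        have := norm_nonneg (x - y)
        simp only [M]
        linarith
    _ < ε := by linarith

theorem cauchySeq_apply_of_cauchySeq_on_dense {U : ℕ → X →L[𝕜] Y} (hU : ∀ k, ‖U k‖ ≤ C)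
    (hD : Dense D) (h : ∀ x ∈ D, CauchySeq fun k => U k x) (x : X) :
    CauchySeq fun k => U k x := by
  have key : ∀ x, CauchySeq (fun k => U k x) ↔
      Tendsto (fun p : ℕ × ℕ => (U p.1 - U p.2) x) atTop (𝓝 ((0 : X →L[𝕜] Y) x)) := fun x => by
    simp only [cauchySeq_iff_tendsto_dist_atTop_0, dist_eq_norm,
      _root_.zero_apply, _root_.sub_apply]
    exact tendsto_zero_iff_norm_tendsto_zero.symm
  refine (key x).2 (tendsto_apply_of_tendsto_on_dense (C := C + C)
    (.of_forall fun p => norm_sub_le_of_le (hU _) (hU _)) hD (fun y hy => (key y).1 (h y hy)) x)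

theorem tendsto_apply_apply {U : ι → X →L[𝕜] Y} {v : ι → X} {x : X} {y : Y}
    (hU : ∀ᶠ i in l, ‖U i‖ ≤ C) (hUx : Tendsto (fun i => U i x) l (𝓝 y))
    (hv : Tendsto v l (𝓝 x)) : Tendsto (fun i => U i (v i)) l (𝓝 y) := by
  have hdiff : Tendsto (fun i => U i (v i - x)) l (𝓝 0) := by
    refine squeeze_zero_norm' (a := fun i => C * ‖v i - x‖)
      (hU.mono fun i hi => (U i).le_of_opNorm_le hi _) ?_
    simpa using (tendsto_iff_norm_sub_tendsto_zero.1 hv).const_mul C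
  simpa using hdiff.add hUx

end StrongConvergence

section ExpContraction

variable {X : Type*} [NormedAddCommGroup X] [NormedSpace ℂ X] [CompleteSpace X]
  {B C : X →L[ℂ] X}

theorem norm_exp_smul_sub_one_le_one {P : X →L[ℂ] X} (hP : ‖P‖ ≤ 1) {s : ℝ} (hs : 0 ≤ s) :
    ‖NormedSpace.exp (s • (P - 1))‖ ≤ 1 := by
  let _ : NormedAlgebra ℚ (X →L[ℂ] X) := NormedAlgebra.restrictScalars ℚ ℝ _
  have hpow : ∀ k : ℕ, ‖P ^ k‖ ≤ 1 := fun k => by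
    rcases k.eq_zero_or_pos with rfl | hk
    · exact ContinuousLinearMap.norm_id_le
    · exact (norm_pow_le' P hk).trans (pow_le_one₀ (norm_nonneg _) hP)
  have hexpP : ‖NormedSpace.exp (s • P)‖ ≤ Real.exp s := by
    have hs_sum : HasSum (fun k : ℕ => ((k.factorial : ℝ)⁻¹ * s ^ k)) (Real.exp s) := by
      simpa [Real.exp_eq_exp_ℝ] using NormedSpace.exp_series_hasSum_exp' (𝕂 := ℝ) s
    refine (NormedSpace.exp_series_hasSum_exp' (𝕂 := ℝ) (s • P)).norm_le_of_bounded hs_sum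
      fun k => ?_
    rw [smul_pow, smul_smul, norm_smul, Real.norm_of_nonneg (by positivity)]
    exact mul_le_of_le_one_right (by positivity) (hpow k)
  have hsplit : NormedSpace.exp (s • (P - 1)) = Real.exp (-s) • NormedSpace.exp (s • P) := by
    have hone : NormedSpace.exp ((-s) • (1 : X →L[ℂ] X)) = Real.exp (-s) • 1 := by
      rw [Real.exp_eq_exp_ℝ]
      simpa only [Algebra.algebraMap_eq_smul_one] using
        (NormedSpace.algebraMap_exp_comm (𝔸 := X →L[ℂ] X) (-s)).symm
    rw [smul_sub, sub_eq_add_neg, ← neg_smul,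
      NormedSpace.exp_add_of_commute ((Commute.one_right _).smul_right _), hone, mul_smul_one]
  rw [hsplit, norm_smul, Real.norm_of_nonneg (Real.exp_nonneg _)]
  calc Real.exp (-s) * ‖NormedSpace.exp (s • P)‖ ≤ Real.exp (-s) * Real.exp s := by gcongr
    _ = 1 := by rw [← Real.exp_add, neg_add_cancel, Real.exp_zero]

theorem hasDerivAt_exp_smul_apply (B : X →L[ℂ] X) (f : X) (t : ℝ) :
    HasDerivAt (fun u : ℝ => NormedSpace.exp (u • B) f) (NormedSpace.exp (t • B) (B f)) t :=
  ((ContinuousLinearMap.apply ℂ X f).restrictScalars ℝ).hasFDerivAt.comp_hasDerivAt t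
    (hasDerivAt_exp_smul_const (𝕂 := ℝ) B t)

theorem norm_exp_smul_apply_sub_le (hB : ∀ s : ℝ, 0 ≤ s → ‖NormedSpace.exp (s • B)‖ ≤ 1)
    (hC : ∀ s : ℝ, 0 ≤ s → ‖NormedSpace.exp (s • C)‖ ≤ 1) (hBC : Commute B C) {t : ℝ}
    (ht : 0 ≤ t) (f : X) :
    ‖NormedSpace.exp (t • B) f - NormedSpace.exp (t • C) f‖ ≤ t * ‖B f - C f‖ := by
  let _ : NormedAlgebra ℚ (X →L[ℂ] X) := NormedAlgebra.restrictScalars ℚ ℝ _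
  let U : ℝ → X →L[ℂ] X := fun s => NormedSpace.exp (t • C) * NormedSpace.exp (s • (B - C))
  have hU : ∀ s, U s = NormedSpace.exp (s • B) * NormedSpace.exp ((t - s) • C) := by
    intro s
    simp only [U]
    rw [← NormedSpace.exp_add_of_commute, ← NormedSpace.exp_add_of_commute]
    · congr 1
      module
    · exact (hBC.smul_left _).smul_right _
    · exact ((hBC.symm.sub_right (Commute.refl C)).smul_right _).smul_left _
  have hderiv : ∀ s, HasDerivAt (fun u => U u f) (U s ((B - C) f)) s := fun s =>
    ((NormedSpace.exp (t • C)).restrictScalars ℝ).hasFDerivAt.comp_hasDerivAt s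
      (hasDerivAt_exp_smul_apply (B - C) f s)
  have hbound : ∀ s ∈ Set.Ico 0 t, ‖U s ((B - C) f)‖ ≤ ‖B f - C f‖ := fun s hs => by
    rw [hU]
    simpa using (NormedSpace.exp (s • B)).le_of_opNorm_le_of_le (hB s hs.1)
      ((NormedSpace.exp ((t - s) • C)).le_of_opNorm_le (hC _ (sub_nonneg.2 hs.2.le)) ((B - C) f))
  have hzero : U 0 f = NormedSpace.exp (t • C) f := by simp [U]
  have hend : U t f = NormedSpace.exp (t • B) f := by simp [hU]
  simpa [hzero, hend, mul_comm] using norm_image_sub_le_of_norm_deriv_le_segment'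
    (fun s _ => (hderiv s).hasDerivWithinAt) hbound t ⟨ht, le_rfl⟩

end ExpContraction

section Dissipative

variable {X : Type*} [NormedAddCommGroup X] [NormedSpace ℂ X]

/-- A linear relation on `X` (a possibly unbounded, possibly multivalued operator, encoded by its
graph) is dissipative if `l - G` is bounded below by `l` for every `l > 0`. -/
def IsDissipative (G : Submodule ℂ (X × X)) : Prop :=
  ∀ z ∈ G, ∀ l : ℝ, 0 < l → l * ‖z.1‖ ≤ ‖l • z.1 - z.2‖

/-- An m-dissipative relation: dissipative, densely defined, and with `l - G` onto for all
`l > 0`. These are the generators of contraction semigroups. -/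
structure IsMDissipative (G : Submodule ℂ (X × X)) : Prop where
  isDissipative : IsDissipative G
  exists_sub_eq : ∀ l : ℝ, 0 < l → ∀ v, ∃ z ∈ G, l • z.1 - z.2 = v
  dense_domain : Dense (Prod.fst '' (G : Set (X × X)))

/-- The map `l - G`, as a linear map on the relation `G`. -/
def shiftMap (G : Submodule ℂ (X × X)) (l : ℝ) : G →L[ℂ] X :=
  (l • ContinuousLinearMap.fst ℂ X X - ContinuousLinearMap.snd ℂ X X).comp G.subtypeL

variable {G : Submodule ℂ (X × X)} {l m : ℝ}

theorem shiftMap_apply (z : G) : shiftMap G l z = l • z.1.1 - z.1.2 := by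
  simp [shiftMap]

theorem IsDissipative.shiftMap_injective (hG : IsDissipative G) (hl : 0 < l) :
    Function.Injective (shiftMap G l) := by
  refine (injective_iff_map_eq_zero _).2 fun z hz => ?_
  rw [shiftMap_apply] at hz
  have hnorm := hG z z.2 l hl
  rw [hz, norm_zero] at hnorm
  have hfst : z.1.1 = 0 :=
    norm_le_zero_iff.1 (nonpos_of_mul_nonpos_right hnorm hl)
  have hsnd : z.1.2 = 0 := by simpa [hfst] using hz
  exact Subtype.ext (Prod.ext hfst hsnd)

namespace IsMDissipative

theorem shiftMap_bijective (hG : IsMDissipative G) (hl : 0 < l) :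
    Function.Bijective (shiftMap G l) := by
  refine ⟨hG.isDissipative.shiftMap_injective hl, fun v => ?_⟩
  obtain ⟨z, hz, hzv⟩ := hG.exists_sub_eq l hl v
  exact ⟨⟨z, hz⟩, (shiftMap_apply _).trans hzv⟩

/-- The resolvent `(l - G)⁻¹` of an m-dissipative relation. -/
def resolvent (hG : IsMDissipative G) (hl : 0 < l) : X →L[ℂ] X :=
  (LinearMap.fst ℂ X X ∘ₗ G.subtype ∘ₗ (LinearEquiv.ofBijective (shiftMap G l).toLinearMap
    (hG.shiftMap_bijective hl)).symm).mkContinuous l⁻¹ fun v => by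
      obtain ⟨z, rfl⟩ := (LinearEquiv.ofBijective _ (hG.shiftMap_bijective hl)).surjective v
      rw [← div_eq_inv_mul, le_div_iff₀' hl, LinearMap.comp_apply, LinearMap.comp_apply,
        LinearEquiv.coe_coe, LinearEquiv.symm_apply_apply, LinearEquiv.ofBijective_apply,
        ContinuousLinearMap.coe_coe, shiftMap_apply]
      exact hG.isDissipative z z.2 l hl

theorem resolvent_smul_sub (hG : IsMDissipative G) (hl : 0 < l) {z : X × X} (hz : z ∈ G) :
    hG.resolvent hl (l • z.1 - z.2) = z.1 := by
  rw [← shiftMap_apply ⟨z, hz⟩]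
  exact congrArg (fun w : G => w.1.1)
    ((LinearEquiv.ofBijective _ (hG.shiftMap_bijective hl)).symm_apply_apply ⟨z, hz⟩)

theorem resolvent_mem (hG : IsMDissipative G) (hl : 0 < l) (v : X) :
    (hG.resolvent hl v, l • hG.resolvent hl v - v) ∈ G := by
  obtain ⟨z, hz, rfl⟩ := hG.exists_sub_eq l hl v
  rwa [hG.resolvent_smul_sub hl hz, sub_sub_cancel]

theorem norm_smul_resolvent_le_one (hG : IsMDissipative G) (hl : 0 < l) :
    ‖l • hG.resolvent hl‖ ≤ 1 := by
  rw [norm_smul, Real.norm_of_nonneg hl.le, ← le_inv_mul_iff₀ hl, mul_one]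
  exact LinearMap.mkContinuous_norm_le _ (inv_nonneg.2 hl.le) _

theorem commute_resolvent (hG : IsMDissipative G) (hl : 0 < l) (hm : 0 < m) :
    Commute (hG.resolvent hl) (hG.resolvent hm) := by
  ext v
  let w := hG.resolvent hm v
  have hRw : hG.resolvent hl w = hG.resolvent hm (hG.resolvent hl v) := by
    have hw : w = hG.resolvent hl v + (l - m) • hG.resolvent hl w := by
      rw [← (hG.resolvent hl).map_smul_of_tower, ← map_add]
      refine (hG.resolvent_smul_sub hl (hG.resolvent_mem hm v)).symm.trans ?_
      congr 1
      change l • w - (m • w - v) = v + (l - m) • w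
      module
    have hmem := hG.resolvent_mem hl w
    have hsnd : l • hG.resolvent hl w - w = m • hG.resolvent hl w - hG.resolvent hl v := by
      nth_rewrite 2 [hw]
      module
    rw [hsnd] at hmem
    simpa using (hG.resolvent_smul_sub hm hmem).symm
  exact hRw

/-- The contraction `l (l - G)⁻¹` for `l = k + 1`, which tends strongly to the identity. -/
def smulResolvent (hG : IsMDissipative G) (k : ℕ) : X →L[ℂ] X :=
  (k + 1 : ℝ) • hG.resolvent (l := k + 1) k.cast_add_one_pos

/-- The Yosida approximation `l² (l - G)⁻¹ - l` of an m-dissipative relation, for `l = k + 1`. -/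
def yosida (hG : IsMDissipative G) (k : ℕ) : X →L[ℂ] X :=
  (k + 1 : ℝ) • (hG.smulResolvent k - 1)

theorem commute_yosida (hG : IsMDissipative G) (j k : ℕ) :
    Commute (hG.yosida j) (hG.yosida k) := by
  have hcomm : Commute (hG.smulResolvent j) (hG.smulResolvent k) :=
    ((hG.commute_resolvent _ _).smul_left _).smul_right _
  exact (((hcomm.sub_right (.one_right _)).sub_left (.one_left _)).smul_left _).smul_right _

theorem smulResolvent_fst (hG : IsMDissipative G) (k : ℕ) {z : X × X} (hz : z ∈ G) :
    hG.smulResolvent k z.1 = z.1 + hG.resolvent (l := k + 1) k.cast_add_one_pos z.2 := by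
  conv_rhs => rw [← hG.resolvent_smul_sub k.cast_add_one_pos hz, ← map_add, sub_add_cancel]
  simp [smulResolvent]

theorem yosida_fst (hG : IsMDissipative G) (k : ℕ) {z : X × X} (hz : z ∈ G) :
    hG.yosida k z.1 = hG.smulResolvent k z.2 := by
  rw [yosida, _root_.smul_apply, _root_.sub_apply, hG.smulResolvent_fst k hz]
  simp [smulResolvent]

theorem norm_smulResolvent_le_one (hG : IsMDissipative G) (k : ℕ) : ‖hG.smulResolvent k‖ ≤ 1 :=
  hG.norm_smul_resolvent_le_one _

theorem tendsto_smulResolvent (hG : IsMDissipative G) (v : X) :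
    Tendsto (fun k => hG.smulResolvent k v) atTop (𝓝 v) := by
  refine tendsto_apply_of_tendsto_on_dense (S := .id ℂ X)
    (.of_forall hG.norm_smulResolvent_le_one) hG.dense_domain ?_ v
  rintro _ ⟨z, hz, rfl⟩
  refine tendsto_iff_norm_sub_tendsto_zero.2 (squeeze_zero (g := fun k : ℕ => 1 / (k + 1) * ‖z.2‖)
    (fun _ => norm_nonneg _) (fun k => ?_)
    (by simpa using tendsto_one_div_add_atTop_nhds_zero_nat.mul_const ‖z.2‖))
  have hk : (0 : ℝ) < k + 1 := k.cast_add_one_pos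
  have hnorm := (hG.smulResolvent k).le_of_opNorm_le (hG.norm_smulResolvent_le_one k) z.2
  rw [smulResolvent, _root_.smul_apply, norm_smul, Real.norm_of_nonneg hk.le, one_mul] at hnorm
  rw [hG.smulResolvent_fst k hz, ContinuousLinearMap.id_apply, add_sub_cancel_left, one_div,
    ← div_eq_inv_mul, le_div_iff₀' hk]
  exact hnorm

theorem tendsto_yosida (hG : IsMDissipative G) {z : X × X} (hz : z ∈ G) :
    Tendsto (fun k => hG.yosida k z.1) atTop (𝓝 z.2) := by
  simpa only [hG.yosida_fst _ hz] using hG.tendsto_smulResolvent z.2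

end IsMDissipative
end Dissipative

section ContractionSemigroup

variable {X : Type*} [NormedAddCommGroup X] [NormedSpace ℂ X]

/-- A strongly continuous semigroup of contractions. Only the values `T t` with `0 ≤ t` matter. -/
structure IsContractionSemigroup (T : ℝ → X →L[ℂ] X) : Prop where
  map_zero : T 0 = ContinuousLinearMap.id ℂ X
  map_add : ∀ s t : ℝ, 0 ≤ s → 0 ≤ t → T (s + t) = (T s).comp (T t)
  norm_le_one : ∀ t : ℝ, 0 ≤ t → ‖T t‖ ≤ 1
  continuousOn : ∀ f : X, ContinuousOn (fun t => T t f) (Set.Ici 0)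

/-- `HasGenerator T G` says that the graph of the infinitesimal generator of `T`, i.e. of the right
derivative of `T` at `0` with its maximal domain, is `G`. -/
def HasGenerator (T : ℝ → X →L[ℂ] X) (G : Submodule ℂ (X × X)) : Prop :=
  ∀ f g : X, (f, g) ∈ G ↔ Tendsto (fun t : ℝ => t⁻¹ • (T t f - f)) (𝓝[>] 0) (𝓝 g)

theorem IsContractionSemigroup.mul_norm_le_norm_smul_sub {T : ℝ → X →L[ℂ] X}
    (hT : IsContractionSemigroup T) {f g : X}
    (hfg : Tendsto (fun t : ℝ => t⁻¹ • (T t f - f)) (𝓝[>] 0) (𝓝 g)) {l : ℝ} (hl : 0 < l) :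
    l * ‖f‖ ≤ ‖l • f - g‖ := by
  refine ge_of_tendsto (hfg.const_sub (l • f)).norm ?_
  filter_upwards [self_mem_nhdsWithin] with t (ht : 0 < t)
  have hTf : ‖T t f‖ ≤ ‖f‖ := by simpa using (T t).le_of_opNorm_le (hT.norm_le_one t ht.le) f
  calc l * ‖f‖ ≤ (l + t⁻¹) * ‖f‖ - t⁻¹ * ‖T t f‖ := by
        have := mul_le_mul_of_nonneg_left hTf (inv_pos.2 ht).le
        linarith
    _ = ‖(l + t⁻¹) • f‖ - ‖t⁻¹ • T t f‖ := by
        rw [norm_smul, norm_smul, Real.norm_of_nonneg (by positivity),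
          Real.norm_of_nonneg (by positivity)]
    _ ≤ ‖(l + t⁻¹) • f - t⁻¹ • T t f‖ := norm_sub_norm_le _ _
    _ = ‖l • f - t⁻¹ • (T t f - f)‖ := by congr 1; module

end ContractionSemigroup

namespace IsMDissipative

variable {X : Type*} [NormedAddCommGroup X] [NormedSpace ℂ X] [CompleteSpace X]
  {G : Submodule ℂ (X × X)} {s t : ℝ}

theorem norm_exp_smul_yosida_le_one (hG : IsMDissipative G) (ht : 0 ≤ t) (k : ℕ) :
    ‖NormedSpace.exp (t • hG.yosida k)‖ ≤ 1 := by
  rw [yosida, smul_smul]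
  exact norm_exp_smul_sub_one_le_one (hG.norm_smulResolvent_le_one k) (by positivity)

theorem cauchySeq_exp_smul_yosida (hG : IsMDissipative G) (ht : 0 ≤ t) (v : X) :
    CauchySeq fun k => NormedSpace.exp (t • hG.yosida k) v := by
  refine cauchySeq_apply_of_cauchySeq_on_dense (hG.norm_exp_smul_yosida_le_one ht)
    hG.dense_domain ?_ v
  rintro _ ⟨z, hz, rfl⟩
  have hcauchy := cauchySeq_iff_tendsto_dist_atTop_0.1 (hG.tendsto_yosida hz).cauchySeq
  refine cauchySeq_iff_tendsto_dist_atTop_0.2 (squeeze_zero (fun _ => dist_nonneg) (fun p => ?_)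
    (by simpa using hcauchy.const_mul t))
  simp only [dist_eq_norm]
  exact norm_exp_smul_apply_sub_le (fun s hs => hG.norm_exp_smul_yosida_le_one hs p.1)
    (fun s hs => hG.norm_exp_smul_yosida_le_one hs p.2) (hG.commute_yosida _ _) ht z.1

/-- The semigroup generated by an m-dissipative relation, as the strong limit of the exponentials
of its Yosida approximations (extended by the identity to negative times). -/
def semigroup (hG : IsMDissipative G) (t : ℝ) : X →L[ℂ] X :=
  continuousLinearMapOfTendsto (fun k => NormedSpace.exp (max t 0 • hG.yosida k))
    (tendsto_pi_nhds.2 fun v =>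
      (hG.cauchySeq_exp_smul_yosida (le_max_right t 0) v).tendsto_limUnder)

theorem tendsto_exp_smul_yosida (hG : IsMDissipative G) (ht : 0 ≤ t) (v : X) :
    Tendsto (fun k => NormedSpace.exp (t • hG.yosida k) v) atTop (𝓝 (hG.semigroup t v)) := by
  have hlim : Tendsto (fun k => NormedSpace.exp (max t 0 • hG.yosida k) v) atTop
      (𝓝 (hG.semigroup t v)) :=
    (hG.cauchySeq_exp_smul_yosida (le_max_right t 0) v).tendsto_limUnder
  rwa [max_eq_left ht] at hlim

theorem norm_semigroup_le_one (hG : IsMDissipative G) (ht : 0 ≤ t) : ‖hG.semigroup t‖ ≤ 1 :=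
  ContinuousLinearMap.opNorm_le_bound _ zero_le_one fun v =>
    le_of_tendsto (hG.tendsto_exp_smul_yosida ht v).norm (.of_forall fun k =>
      (NormedSpace.exp (t • hG.yosida k)).le_of_opNorm_le
        (hG.norm_exp_smul_yosida_le_one ht k) v)

theorem semigroup_add (hG : IsMDissipative G) (hs : 0 ≤ s) (ht : 0 ≤ t) :
    hG.semigroup (s + t) = (hG.semigroup s).comp (hG.semigroup t) := by
  let _ : NormedAlgebra ℚ (X →L[ℂ] X) := NormedAlgebra.restrictScalars ℚ ℝ _
  ext v
  refine tendsto_nhds_unique (hG.tendsto_exp_smul_yosida (add_nonneg hs ht) v) ?_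
  have hexp : ∀ k, NormedSpace.exp ((s + t) • hG.yosida k) =
      (NormedSpace.exp (s • hG.yosida k)).comp (NormedSpace.exp (t • hG.yosida k)) := fun k => by
    have hcomm : Commute (s • hG.yosida k) (t • hG.yosida k) :=
      ((Commute.refl _).smul_left _).smul_right _
    rw [add_smul, NormedSpace.exp_add_of_commute hcomm, ContinuousLinearMap.mul_def]
  simp only [hexp, ContinuousLinearMap.comp_apply]
  exact tendsto_apply_apply (.of_forall (hG.norm_exp_smul_yosida_le_one hs))
    (hG.tendsto_exp_smul_yosida hs _) (hG.tendsto_exp_smul_yosida ht v)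

theorem norm_semigroup_sub_semigroup_le (hG : IsMDissipative G) (hs : 0 ≤ s) (ht : 0 ≤ t)
    {z : X × X} (hz : z ∈ G) :
    ‖hG.semigroup t z.1 - hG.semigroup s z.1‖ ≤ |t - s| * ‖z.2‖ := by
  refine le_of_tendsto_of_tendsto ((hG.tendsto_exp_smul_yosida ht z.1).sub
    (hG.tendsto_exp_smul_yosida hs z.1)).norm
    ((hG.tendsto_yosida hz).norm.const_mul |t - s|) (.of_forall fun k => ?_)
  have hnonneg : ∀ {r : ℝ}, 0 ≤ r → ∀ u : ℝ, 0 ≤ u →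
      ‖NormedSpace.exp (u • r • hG.yosida k)‖ ≤ 1 := fun hr u hu => by
    rw [smul_smul]
    exact hG.norm_exp_smul_yosida_le_one (mul_nonneg hu hr) k
  have hle := norm_exp_smul_apply_sub_le (hnonneg ht) (hnonneg hs)
    (((Commute.refl _).smul_left _).smul_right _) zero_le_one z.1
  rwa [one_smul, one_smul, one_mul, _root_.smul_apply, _root_.smul_apply, ← sub_smul, norm_smul,
    Real.norm_eq_abs] at hle

theorem continuousOn_semigroup (hG : IsMDissipative G) (v : X) :
    ContinuousOn (fun t => hG.semigroup t v) (Set.Ici 0) := by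
  intro t ht
  refine tendsto_apply_of_tendsto_on_dense (C := 1)
    (eventually_mem_nhdsWithin.mono fun s hs => hG.norm_semigroup_le_one hs) hG.dense_domain ?_ v
  rintro _ ⟨z, hz, rfl⟩
  refine tendsto_iff_norm_sub_tendsto_zero.2 (squeeze_zero' (.of_forall fun _ => norm_nonneg _)
    (eventually_mem_nhdsWithin.mono fun s hs =>
      hG.norm_semigroup_sub_semigroup_le ht hs hz) ?_)
  have hcont : Continuous fun s => |s - t| * ‖z.2‖ := by fun_prop
  simpa using (hcont.tendsto t).mono_left nhdsWithin_le_nhds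

theorem isContractionSemigroup_semigroup (hG : IsMDissipative G) :
    IsContractionSemigroup hG.semigroup where
  map_zero := by
    ext v
    refine tendsto_nhds_unique (hG.tendsto_exp_smul_yosida le_rfl v) ?_
    simp
  map_add _ _ hs ht := hG.semigroup_add hs ht
  norm_le_one _ ht := hG.norm_semigroup_le_one ht
  continuousOn := hG.continuousOn_semigroup

theorem semigroup_sub_self_eq_integral (hG : IsMDissipative G) (ht : 0 ≤ t) {z : X × X}
    (hz : z ∈ G) : hG.semigroup t z.1 - z.1 = ∫ s in (0 : ℝ)..t, hG.semigroup s z.2 := by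
  have hcont : ∀ k, Continuous fun s : ℝ =>
      NormedSpace.exp (s • hG.yosida k) (hG.yosida k z.1) := fun k =>
    continuous_iff_continuousAt.2 fun s =>
      (hasDerivAt_exp_smul_apply (hG.yosida k) (hG.yosida k z.1) s).continuousAt
  have hyosida : ∀ k, NormedSpace.exp (t • hG.yosida k) z.1 - z.1 =
      ∫ s in (0 : ℝ)..t, NormedSpace.exp (s • hG.yosida k) (hG.yosida k z.1) := fun k => by
    rw [intervalIntegral.integral_eq_sub_of_hasDerivAt
      (fun s _ => hasDerivAt_exp_smul_apply (hG.yosida k) z.1 s)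
      ((hcont k).intervalIntegrable _ _)]
    simp
  refine tendsto_nhds_unique ((hG.tendsto_exp_smul_yosida ht z.1).sub_const z.1) ?_
  simp only [hyosida]
  have hIoc : ∀ {s : ℝ}, s ∈ Set.uIoc 0 t → 0 ≤ s := fun hs => (Set.uIoc_of_le ht ▸ hs).1.le
  refine intervalIntegral.tendsto_integral_filter_of_dominated_convergence (fun _ => ‖z.2‖)
    (.of_forall fun k => (hcont k).aestronglyMeasurable)
    (.of_forall fun k => .of_forall fun s hs => ?_) intervalIntegrable_const
    (.of_forall fun s hs => tendsto_apply_apply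
      (.of_forall (hG.norm_exp_smul_yosida_le_one (hIoc hs)))
      (hG.tendsto_exp_smul_yosida (hIoc hs) z.2) (hG.tendsto_yosida hz))
  rw [hG.yosida_fst k hz]
  simpa using (NormedSpace.exp (s • hG.yosida k)).le_of_opNorm_le_of_le
    (hG.norm_exp_smul_yosida_le_one (hIoc hs) k)
    ((hG.smulResolvent k).le_of_opNorm_le (hG.norm_smulResolvent_le_one k) z.2)

theorem tendsto_inv_smul_semigroup_sub (hG : IsMDissipative G) {z : X × X} (hz : z ∈ G) :
    Tendsto (fun t : ℝ => t⁻¹ • (hG.semigroup t z.1 - z.1)) (𝓝[>] 0) (𝓝 z.2) := by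
  have hcont := hG.continuousOn_semigroup z.2
  have hmeas : StronglyMeasurableAtFilter (fun s => hG.semigroup s z.2) (𝓝[>] 0) volume :=
    ⟨Set.Ioi 0, self_mem_nhdsWithin,
      (hcont.mono Set.Ioi_subset_Ici_self).aestronglyMeasurable measurableSet_Ioi⟩
  have hderiv : HasDerivWithinAt (fun t => ∫ s in (0 : ℝ)..t, hG.semigroup s z.2)
      (hG.semigroup 0 z.2) (Set.Ici 0) 0 :=
    intervalIntegral.integral_hasDerivWithinAt_right .refl hmeas
      ((hcont 0 Set.self_mem_Ici).mono Set.Ioi_subset_Ici_self)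
  rw [← hasDerivWithinAt_Ioi_iff_Ici, hasDerivWithinAt_iff_tendsto_slope' Set.self_notMem_Ioi,
    hG.isContractionSemigroup_semigroup.map_zero, ContinuousLinearMap.id_apply] at hderiv
  refine hderiv.congr' (eventually_mem_nhdsWithin.mono fun t ht => ?_)
  beta_reduce
  rw [slope_def_module, intervalIntegral.integral_same, sub_zero, sub_zero,
    hG.semigroup_sub_self_eq_integral (le_of_lt ht) hz]

theorem hasGenerator_semigroup (hG : IsMDissipative G) : HasGenerator hG.semigroup G := by
  intro f g
  refine ⟨hG.tendsto_inv_smul_semigroup_sub (z := (f, g)), fun hfg => ?_⟩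
  obtain ⟨z, hz, hzfg⟩ := hG.exists_sub_eq 1 one_pos (f - g)
  rw [one_smul] at hzfg
  have hdiff : Tendsto (fun t : ℝ => t⁻¹ • (hG.semigroup t (f - z.1) - (f - z.1))) (𝓝[>] 0)
      (𝓝 (g - z.2)) := by
    refine (hfg.sub (hG.tendsto_inv_smul_semigroup_sub hz)).congr fun t => ?_
    rw [map_sub, ← smul_sub, sub_sub_sub_comm]
  have hnorm := hG.isContractionSemigroup_semigroup.mul_norm_le_norm_smul_sub hdiff one_pos
  have hzero : (1 : ℝ) • (f - z.1) - (g - z.2) = 0 := by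
    rw [one_smul, sub_sub_sub_comm, hzfg, sub_self]
  rw [hzero, norm_zero, one_mul, norm_le_zero_iff, sub_eq_zero] at hnorm
  have hg : g = z.2 := by rw [hnorm] at hzfg; exact (sub_right_inj.1 hzfg).symm
  rwa [hnorm, hg]

end IsMDissipative

section LumerPhillips

variable {H : Type*} [NormedAddCommGroup H] [InnerProductSpace ℂ H]
  {G : Submodule ℂ (H × H)} {l : ℝ}

theorem isDissipative_of_re_inner_nonpos (hG : ∀ z ∈ G, (inner ℂ z.1 z.2).re ≤ 0) :
    IsDissipative G := by
  intro z hz l _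
  have hself : (inner ℂ z.1 (l • z.1)).re = l * ‖z.1‖ ^ 2 := by
    rw [inner_smul_right_eq_smul, Complex.smul_re, smul_eq_mul, norm_sq_eq_re_inner (𝕜 := ℂ)]
    rfl
  have hcs : l * ‖z.1‖ ^ 2 ≤ ‖z.1‖ * ‖l • z.1 - z.2‖ :=
    calc l * ‖z.1‖ ^ 2 ≤ (inner ℂ z.1 (l • z.1 - z.2)).re := by
          rw [inner_sub_right, Complex.sub_re, hself]
          linarith [hG z hz]
      _ ≤ ‖z.1‖ * ‖l • z.1 - z.2‖ := (Complex.re_le_norm _).trans (norm_inner_le_norm _ _)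
  rcases (norm_nonneg z.1).eq_or_lt with h | h
  · simp [← h]
  · exact le_of_mul_le_mul_left (by linarith) h

theorem isClosed_adjoint : IsClosed (G.adjoint : Set (H × H)) := by
  have : (G.adjoint : Set (H × H)) = ⋂ z ∈ G, {x | inner ℂ z.2 x.1 - inner ℂ z.1 x.2 = 0} := by
    ext x
    simp [Submodule.mem_adjoint_iff]
  rw [this]
  exact isClosed_biInter fun z _ => isClosed_eq (by fun_prop) continuous_const

theorem IsDissipative.isClosed_range_shiftMap [CompleteSpace H] (hG : IsDissipative G)
    (hclosed : IsClosed (G : Set (H × H))) (hl : 0 < l) :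
    IsClosed (Set.range (shiftMap G l)) := by
  have : CompleteSpace G := hclosed.completeSpace_coe
  refine (AddMonoidHomClass.antilipschitz_of_bound (K := ⟨max l⁻¹ 2, by positivity⟩)
    (shiftMap G l) fun z => ?_).isClosed_range (shiftMap G l).uniformContinuous
  have hfst : l * ‖z.1.1‖ ≤ ‖shiftMap G l z‖ := by
    simpa [shiftMap_apply] using hG z z.2 l hl
  have hsnd : ‖z.1.2‖ ≤ l * ‖z.1.1‖ + ‖shiftMap G l z‖ :=
    calc ‖z.1.2‖ = ‖l • z.1.1 - shiftMap G l z‖ := by rw [shiftMap_apply, sub_sub_cancel]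
      _ ≤ l * ‖z.1.1‖ + ‖shiftMap G l z‖ := by
          simpa [norm_smul, abs_of_pos hl] using norm_sub_le (l • z.1.1) (shiftMap G l z)
  refine max_le ?_ ?_
  · exact ((le_inv_mul_iff₀ hl).2 hfst).trans (by gcongr; exact le_max_left _ _)
  · calc ‖z.1.2‖ ≤ 2 * ‖shiftMap G l z‖ := by linarith
      _ ≤ max l⁻¹ 2 * ‖shiftMap G l z‖ := by gcongr; exact le_max_right _ _

theorem orthogonal_range_shiftMap_eq_bot (hl : 0 < l)
    (hadj : ∀ z ∈ G.adjoint, (inner ℂ z.1 z.2).re ≤ 0) :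
    (LinearMap.range (shiftMap G l).toLinearMap)ᗮ = ⊥ := by
  refine (Submodule.eq_bot_iff _).2 fun h hh => ?_
  have hmem : (h, l • h) ∈ G.adjoint := by
    refine (Submodule.mem_adjoint_iff _ _).2 fun a b hab => ?_
    have horth := hh _ ⟨⟨(a, b), hab⟩, rfl⟩
    rw [ContinuousLinearMap.coe_coe, shiftMap_apply, inner_sub_left,
      inner_smul_left_eq_smul] at horth
    rw [inner_smul_right_eq_smul, ← neg_sub, horth, neg_zero]
  have hle : l * ‖h‖ ^ 2 ≤ 0 := by
    simpa [inner_smul_right_eq_smul, inner_self_eq_norm_sq_to_K, ← Complex.ofReal_pow]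
      using hadj _ hmem
  exact norm_eq_zero.1 (pow_eq_zero_iff two_ne_zero |>.1
    ((nonpos_of_mul_nonpos_right hle hl).antisymm (sq_nonneg _)))

theorem dense_domain_of_re_inner_nonpos [CompleteSpace H]
    (hfun : ∀ g, (0, g) ∈ G → g = 0) (hG : ∀ z ∈ G, (inner ℂ z.1 z.2).re ≤ 0)
    (hsurj : Function.Surjective (shiftMap G 1)) : Dense (Prod.fst '' (G : Set (H × H))) := by
  have hbot : (G.map (LinearMap.fst ℂ H H))ᗮ = ⊥ := by
    refine (Submodule.eq_bot_iff _).2 fun h hh => ?_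
    obtain ⟨⟨z, hz⟩, hzh⟩ := hsurj h
    rw [shiftMap_apply, one_smul] at hzh
    have horth : inner ℂ z.1 h = 0 := hh _ ⟨z, hz, rfl⟩
    have hz1 : z.1 = 0 := by
      rw [← hzh, inner_sub_right, inner_self_eq_norm_sq_to_K, sub_eq_zero] at horth
      have hre := hG z hz
      rw [← horth] at hre
      have hsq : ‖z.1‖ ^ 2 ≤ 0 := by simpa [← Complex.ofReal_pow] using hre
      exact norm_eq_zero.1 (pow_eq_zero_iff two_ne_zero |>.1 (hsq.antisymm (sq_nonneg _)))
    have hz2 : z.2 = 0 := hfun _ (by rw [← hz1]; exact hz)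
    rw [← hzh, hz1, hz2, sub_zero]
  exact Submodule.dense_iff_topologicalClosure_eq_top.2
    (Submodule.topologicalClosure_eq_top_iff.2 hbot)

theorem isMDissipative_of_re_inner_nonpos [CompleteSpace H]
    (hclosed : IsClosed (G : Set (H × H))) (hfun : ∀ g, (0, g) ∈ G → g = 0)
    (hG : ∀ z ∈ G, (inner ℂ z.1 z.2).re ≤ 0)
    (hadj : ∀ z ∈ G.adjoint, (inner ℂ z.1 z.2).re ≤ 0) : IsMDissipative G := by
  have hdiss := isDissipative_of_re_inner_nonpos hG
  have hsurj : ∀ l : ℝ, 0 < l → Function.Surjective (shiftMap G l) := fun l hl => by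
    have hdense := Submodule.dense_iff_topologicalClosure_eq_top.2
      (Submodule.topologicalClosure_eq_top_iff.2 (orthogonal_range_shiftMap_eq_bot hl hadj))
    exact Set.range_eq_univ.1
      ((hdiss.isClosed_range_shiftMap hclosed hl).closure_eq.symm.trans hdense.closure_eq)
  refine ⟨hdiss, fun l hl v => ?_, dense_domain_of_re_inner_nonpos hfun hG (hsurj 1 one_pos)⟩
  obtain ⟨z, hz⟩ := hsurj l hl v
  exact ⟨z, z.2, (shiftMap_apply z).symm.trans hz⟩

end LumerPhillips

section QuadraticForm

variable {ι H : Type*} [Fintype ι] [NormedAddCommGroup H] [InnerProductSpace ℂ H]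

theorem re_sum_mul_inner_nonneg {A : Matrix ι ι ℂ} (hA : A.IsSymm)
    (hpos : (A.map Complex.re).PosSemidef) (y : ι → H) :
    0 ≤ (∑ j, ∑ k, A j k * inner ℂ (y j) (y k)).re := by
  let _ : InnerProductSpace ℝ H := InnerProductSpace.complexToReal
  have hsymm : ∑ j, ∑ k, (A j k).im * (inner ℂ (y j) (y k)).im = 0 := by
    have hswap : ∑ j, ∑ k, (A j k).im * (inner ℂ (y j) (y k)).im =
        -∑ j, ∑ k, (A j k).im * (inner ℂ (y j) (y k)).im := by
      conv_rhs => rw [Finset.sum_comm]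
      simp_rw [← Finset.sum_neg_distrib]
      refine Finset.sum_congr rfl fun j _ => Finset.sum_congr rfl fun k _ => ?_
      rw [hA.apply, ← inner_conj_symm, Complex.conj_im, mul_neg]
    linarith
  have hschur := (hpos.hadamard (posSemidef_gram ℝ y)).dotProduct_mulVec_nonneg 1
  have hre : (∑ j, ∑ k, A j k * inner ℂ (y j) (y k)).re =
      ∑ j, ∑ k, (A j k).re * inner ℝ (y j) (y k) := by
    simp only [Complex.re_sum, Complex.mul_re, Finset.sum_sub_distrib, hsymm, sub_zero]
    rfl
  rw [hre]
  simpa [dotProduct, mulVec, gram_apply] using hschur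

end QuadraticForm

/-! ### Twisted differential operators on test functions -/

section TwistedOperators

variable {E : Type*} [NormedAddCommGroup E] [NormedSpace ℝ E]

/-- Smooth compactly supported functions `E → ℂ`. -/
abbrev ComplexTestFunction (E : Type*) [NormedAddCommGroup E] [NormedSpace ℝ E] :=
  𝓓((⊤ : TopologicalSpace.Opens E), ℂ)

namespace ComplexTestFunction

/-- Bundles a smooth compactly supported function. -/
def ofContDiff (f : E → ℂ) (hf : ContDiff ℝ (⊤ : ℕ∞) f) (hc : HasCompactSupport f) :
    ComplexTestFunction E :=
  ⟨f, hf, hc, Set.subset_univ _⟩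

theorem differentiable (φ : ComplexTestFunction E) : Differentiable ℝ φ :=
  φ.contDiff.differentiable (by simp)

/-- The directional derivative `∂_w`. -/
def dirDeriv (w : E) : ComplexTestFunction E →ₗ[ℂ] ComplexTestFunction E :=
  (TestFunction.lineDerivCLM ℂ w : ComplexTestFunction E →L[ℂ] ComplexTestFunction E)

theorem dirDeriv_apply (w : E) (φ : ComplexTestFunction E) (x : E) :
    dirDeriv w φ x = fderiv ℝ φ x w :=
  (TestFunction.lineDerivCLM_apply_of_le (by simp)).trans
    (φ.differentiable x).lineDeriv_eq_fderiv

/-- Multiplication by a real linear functional. -/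
def coordMul (ℓ : E →L[ℝ] ℝ) : ComplexTestFunction E →ₗ[ℂ] ComplexTestFunction E where
  toFun φ := ofContDiff (fun x => (ℓ x : ℂ) * φ x)
    ((ofRealCLM.contDiff.comp ℓ.contDiff).mul φ.contDiff) φ.hasCompactSupport.mul_left
  map_add' φ ψ := by ext x; exact mul_add _ _ _
  map_smul' c φ := by ext x; exact mul_left_comm _ _ _

@[simp]
theorem coordMul_apply (ℓ : E →L[ℝ] ℝ) (φ : ComplexTestFunction E) (x : E) :
    coordMul ℓ φ x = (ℓ x : ℂ) * φ x := rfl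

theorem dirDeriv_coordMul (w : E) (ℓ : E →L[ℝ] ℝ) (φ : ComplexTestFunction E) :
    dirDeriv w (coordMul ℓ φ) = coordMul ℓ (dirDeriv w φ) + (ℓ w : ℂ) • φ := by
  ext x
  have h : HasFDerivAt (coordMul ℓ φ) _ x :=
    (ofRealCLM.hasFDerivAt.comp x ℓ.hasFDerivAt).mul (φ.differentiable x).hasFDerivAt
  simp [dirDeriv_apply, h.fderiv, mul_comm]

/-- Complex conjugation of test functions. -/
def conjugate : ComplexTestFunction E →ₛₗ[starRingEnd ℂ] ComplexTestFunction E where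
  toFun φ := ofContDiff (fun x => conj (φ x)) (conjCLE.contDiff.comp φ.contDiff)
    (φ.hasCompactSupport.comp_left (g := starRingEnd ℂ) (map_zero _))
  map_add' φ ψ := by ext x; exact map_add (starRingEnd ℂ) _ _
  map_smul' c φ := by ext x; exact map_mul (starRingEnd ℂ) _ _

@[simp]
theorem conjugate_apply (φ : ComplexTestFunction E) (x : E) : conjugate φ x = conj (φ x) := rfl

theorem conjugate_conjugate (φ : ComplexTestFunction E) : conjugate (conjugate φ) = φ := by
  ext x
  simp

theorem dirDeriv_conjugate (w : E) (φ : ComplexTestFunction E) :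
    dirDeriv w (conjugate φ) = conjugate (dirDeriv w φ) := by
  ext x
  have h : HasFDerivAt (conjugate φ) _ x :=
    conjCLE.hasFDerivAt.comp x (φ.differentiable x).hasFDerivAt
  simp [dirDeriv_apply, h.fderiv]

/-- The dilation by `ε`, normalised so as to preserve the `L¹` norm. -/
def dilate (ε : ℝˣ) : ComplexTestFunction E →ₗ[ℂ] ComplexTestFunction E where
  toFun φ := ofContDiff (fun x => |((ε : ℝ) ^ Module.finrank ℝ E)⁻¹| • φ ((ε : ℝ)⁻¹ • x))
    ((φ.contDiff.comp (contDiff_const_smul _)).const_smul _)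
    ((φ.hasCompactSupport.comp_homeomorph
      (Homeomorph.smulOfNeZero (ε : ℝ)⁻¹ (inv_ne_zero ε.ne_zero))).smul_left
        (f := fun _ => |((ε : ℝ) ^ Module.finrank ℝ E)⁻¹|))
  map_add' φ ψ := by ext x; exact smul_add _ _ _
  map_smul' c φ := by ext x; exact smul_comm _ c (φ _)

theorem dilate_apply (ε : ℝˣ) (φ : ComplexTestFunction E) (x : E) :
    dilate ε φ x = |((ε : ℝ) ^ Module.finrank ℝ E)⁻¹| • φ ((ε : ℝ)⁻¹ • x) := rfl

theorem dilate_neg_one_apply (φ : ComplexTestFunction E) (x : E) :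
    dilate (-1) φ x = φ (-x) := by
  simp [dilate_apply, abs_inv]

theorem dirDeriv_dilate (w : E) (ε : ℝˣ) (φ : ComplexTestFunction E) :
    dirDeriv w (dilate ε φ) = (ε⁻¹ : ℂ) • dilate ε (dirDeriv w φ) := by
  ext x
  have h : HasFDerivAt (dilate ε φ) _ x :=
    ((φ.differentiable _).hasFDerivAt.comp x
      ((hasFDerivAt_id x).const_smul (ε : ℝ)⁻¹)).const_smul |((ε : ℝ) ^ Module.finrank ℝ E)⁻¹|
  simp [dirDeriv_apply, dilate_apply, h.fderiv, mul_left_comm]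

theorem coordMul_dilate (ℓ : E →L[ℝ] ℝ) (ε : ℝˣ) (φ : ComplexTestFunction E) :
    coordMul ℓ (dilate ε φ) = (ε : ℂ) • dilate ε (coordMul ℓ φ) := by
  ext x
  have hε : (ε : ℂ) ≠ 0 := ofReal_ne_zero.2 ε.ne_zero
  simp [dilate_apply]
  field_simp

/-- The involution `φ ↦ conj (φ (-·))`, which turns twisted convolution operators into their
adjoints. -/
def involution (φ : ComplexTestFunction E) : ComplexTestFunction E := dilate (-1) (conjugate φ)

theorem involution_apply (φ : ComplexTestFunction E) (x : E) :
    involution φ x = conj (φ (-x)) := dilate_neg_one_apply _ _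

/-- The twisted translation `φ ↦ exp (i ω(·, u)) φ(· - u)`. -/
def twistedTranslate (ω : E →L[ℝ] E →L[ℝ] ℝ) (u : E) :
    ComplexTestFunction E →ₗ[ℂ] ComplexTestFunction E where
  toFun φ := ofContDiff (fun x => Complex.exp (I * ω x u) * φ (x - u))
    ((contDiff_const.mul (ofRealCLM.contDiff.comp (ω.flip u).contDiff)).cexp.mul
      (φ.contDiff.comp (contDiff_id.sub contDiff_const)))
    (HasCompactSupport.mul_left (φ.hasCompactSupport.comp_homeomorph (Homeomorph.subRight u)))
  map_add' φ ψ := by ext x; exact mul_add _ _ _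
  map_smul' c φ := by ext x; exact mul_left_comm _ _ _

theorem twistedTranslate_apply (ω : E →L[ℝ] E →L[ℝ] ℝ) (u : E) (φ : ComplexTestFunction E)
    (x : E) : twistedTranslate ω u φ x = Complex.exp (I * ω x u) * φ (x - u) := rfl

theorem continuous_twistedTranslate_apply (ω : E →L[ℝ] E →L[ℝ] ℝ) (φ : ComplexTestFunction E) :
    Continuous fun z : E × E => twistedTranslate ω z.1 φ z.2 := by
  simp only [twistedTranslate_apply]
  fun_prop

/-- The twisted derivative `∂_w + i ω(·, w)`. -/
def twistedDeriv (ω : E →L[ℝ] E →L[ℝ] ℝ) (w : E) :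
    ComplexTestFunction E →ₗ[ℂ] ComplexTestFunction E :=
  dirDeriv w + I • coordMul (ω.flip w)

theorem twistedDeriv_apply (ω : E →L[ℝ] E →L[ℝ] ℝ) (w : E) (φ : ComplexTestFunction E) (x : E) :
    twistedDeriv ω w φ x = fderiv ℝ φ x w + I * ω x w * φ x := by
  simp [twistedDeriv, dirDeriv_apply, mul_assoc]

theorem twistedDeriv_neg_eq_sub (ω : E →L[ℝ] E →L[ℝ] ℝ) (w : E) (φ : ComplexTestFunction E) :
    twistedDeriv (-ω) w φ = dirDeriv w φ - I • coordMul (ω.flip w) φ := by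
  ext x
  simp [twistedDeriv, sub_eq_add_neg]

theorem twistedDeriv_conjugate (ω : E →L[ℝ] E →L[ℝ] ℝ) (w : E) (φ : ComplexTestFunction E) :
    twistedDeriv ω w (conjugate φ) = conjugate (twistedDeriv (-ω) w φ) := by
  ext x
  simp [twistedDeriv, dirDeriv_conjugate]

theorem twistedDeriv_dilate_neg_one (ω : E →L[ℝ] E →L[ℝ] ℝ) (w : E)
    (φ : ComplexTestFunction E) :
    twistedDeriv ω w (dilate (-1) φ) = -dilate (-1) (twistedDeriv ω w φ) := by
  simp [twistedDeriv, dirDeriv_dilate, coordMul_dilate, add_comm]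

theorem twistedDeriv_twistedTranslate {ω : E →L[ℝ] E →L[ℝ] ℝ} (hω : ∀ v w, ω w v = -ω v w)
    (w u : E) (φ : ComplexTestFunction E) :
    twistedDeriv ω w (twistedTranslate ω u φ) = twistedTranslate ω u (twistedDeriv ω w φ) := by
  ext x
  have hphase : HasFDerivAt (fun y => Complex.exp (I * ω y u)) _ x :=
    ((ofRealCLM.hasFDerivAt.comp x (ω.flip u).hasFDerivAt).const_mul I).cexp
  have hshift : HasFDerivAt (fun y => φ (y - u)) _ x :=
    (φ.differentiable (x - u)).hasFDerivAt.comp x ((hasFDerivAt_id x).sub_const u)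
  have h : HasFDerivAt (twistedTranslate ω u φ) _ x := hphase.mul hshift
  simp [twistedDeriv_apply, twistedTranslate_apply, h.fderiv, hω w u]
  ring

section SecondOrder

variable {ι : Type*} [Fintype ι]

/-- The second order operator `∑ j k, a_jk V_j V_k` built from the twisted derivatives `V_j` in the
directions `e j`. -/
def twistedOp (A : Matrix ι ι ℂ) (e : ι → E) (ω : E →L[ℝ] E →L[ℝ] ℝ) :
    ComplexTestFunction E →ₗ[ℂ] ComplexTestFunction E :=
  ∑ j, ∑ k, A j k • twistedDeriv ω (e j) ∘ₗ twistedDeriv ω (e k)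

theorem twistedOp_apply (A : Matrix ι ι ℂ) (e : ι → E) (ω : E →L[ℝ] E →L[ℝ] ℝ)
    (φ : ComplexTestFunction E) :
    twistedOp A e ω φ =
      ∑ j, ∑ k, A j k • twistedDeriv ω (e j) (twistedDeriv ω (e k) φ) := by
  simp [twistedOp, LinearMap.sum_apply]

theorem twistedOp_twistedTranslate {ω : E →L[ℝ] E →L[ℝ] ℝ} (hω : ∀ v w, ω w v = -ω v w)
    (A : Matrix ι ι ℂ) (e : ι → E) (u : E) (φ : ComplexTestFunction E) :
    twistedOp A e ω (twistedTranslate ω u φ) = twistedTranslate ω u (twistedOp A e ω φ) := by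
  simp [twistedOp_apply, twistedDeriv_twistedTranslate hω]

theorem twistedOp_conjugate (A : Matrix ι ι ℂ) (e : ι → E) (ω : E →L[ℝ] E →L[ℝ] ℝ)
    (φ : ComplexTestFunction E) :
    twistedOp A e ω (conjugate φ) = conjugate (twistedOp (A.map conj) e (-ω) φ) := by
  simp [twistedOp_apply, twistedDeriv_conjugate]

theorem twistedOp_involution (A : Matrix ι ι ℂ) (e : ι → E) (ω : E →L[ℝ] E →L[ℝ] ℝ)
    (φ : ComplexTestFunction E) :
    twistedOp A e ω (involution φ) = involution (twistedOp (A.map conj) e (-ω) φ) := by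
  simp only [involution, ← twistedOp_conjugate]
  simp [twistedOp_apply, twistedDeriv_dilate_neg_one]

/-- The first order operator `4i ∑ j k, a_jk ∂_j ω(·, e k)`. -/
def firstOrderPart (A : Matrix ι ι ℂ) (e : ι → E) (ω : E →L[ℝ] E →L[ℝ] ℝ) :
    ComplexTestFunction E →ₗ[ℂ] ComplexTestFunction E :=
  ∑ j, ∑ k, (4 * I * A j k) • dirDeriv (e j) ∘ₗ coordMul (ω.flip (e k))

theorem firstOrderPart_apply (A : Matrix ι ι ℂ) (e : ι → E) (ω : E →L[ℝ] E →L[ℝ] ℝ)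
    (φ : ComplexTestFunction E) :
    firstOrderPart A e ω φ =
      ∑ j, ∑ k, (4 * I * A j k) • dirDeriv (e j) (coordMul (ω.flip (e k)) φ) := by
  simp [firstOrderPart, LinearMap.sum_apply]

theorem firstOrderPart_dilate (A : Matrix ι ι ℂ) (e : ι → E) (ω : E →L[ℝ] E →L[ℝ] ℝ) (ε : ℝˣ)
    (φ : ComplexTestFunction E) :
    firstOrderPart A e ω (dilate ε φ) = dilate ε (firstOrderPart A e ω φ) := by
  have hε : (ε : ℂ) ≠ 0 := ofReal_ne_zero.2 ε.ne_zero
  simp only [firstOrderPart_apply, coordMul_dilate, dirDeriv_dilate, map_smul, map_sum, smul_smul,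
    mul_assoc, mul_inv_cancel₀ hε, mul_one]

theorem twistedDeriv_twistedDeriv_sub_neg (ω : E →L[ℝ] E →L[ℝ] ℝ) (v w : E)
    (φ : ComplexTestFunction E) :
    twistedDeriv ω v (twistedDeriv ω w φ) - twistedDeriv (-ω) v (twistedDeriv (-ω) w φ) =
      (2 * I) • (dirDeriv v (coordMul (ω.flip w) φ) + dirDeriv w (coordMul (ω.flip v) φ)
        - (ω w v : ℂ) • φ) := by
  rw [dirDeriv_coordMul w (ω.flip v)]
  simp only [twistedDeriv_neg_eq_sub]
  ext x
  simp [twistedDeriv, dirDeriv_coordMul]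
  ring

theorem twistedOp_sub_twistedOp_neg {A : Matrix ι ι ℂ} (hA : A.IsSymm) (e : ι → E)
    {ω : E →L[ℝ] E →L[ℝ] ℝ} (hω : ∀ v w, ω w v = -ω v w) (φ : ComplexTestFunction E) :
    twistedOp A e ω φ - twistedOp A e (-ω) φ = firstOrderPart A e ω φ := by
  have hzero : ∑ j, ∑ k, A j k * (ω (e k) (e j) : ℂ) = 0 := by
    refine self_eq_neg.1 (Finset.sum_comm.trans ?_)
    simp only [← Finset.sum_neg_distrib]
    refine Finset.sum_congr rfl fun j _ => Finset.sum_congr rfl fun k _ => ?_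
    rw [hA.apply, hω (e k), ofReal_neg, mul_neg]
  have hswap : ∑ j, ∑ k, A j k • dirDeriv (e k) (coordMul (ω.flip (e j)) φ) =
      ∑ j, ∑ k, A j k • dirDeriv (e j) (coordMul (ω.flip (e k)) φ) := by
    rw [Finset.sum_comm]
    simp only [hA.apply]
  have hterm (j k : ι) : A j k • twistedDeriv ω (e j) (twistedDeriv ω (e k) φ) -
      A j k • twistedDeriv (-ω) (e j) (twistedDeriv (-ω) (e k) φ) =
      (2 * I) • (A j k • dirDeriv (e j) (coordMul (ω.flip (e k)) φ) +
        A j k • dirDeriv (e k) (coordMul (ω.flip (e j)) φ) -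
        (A j k * (ω (e k) (e j) : ℂ)) • φ) := by
    rw [← smul_sub, twistedDeriv_twistedDeriv_sub_neg]
    module
  calc twistedOp A e ω φ - twistedOp A e (-ω) φ
      = ∑ j, ∑ k, (A j k • twistedDeriv ω (e j) (twistedDeriv ω (e k) φ) -
          A j k • twistedDeriv (-ω) (e j) (twistedDeriv (-ω) (e k) φ)) := by
        simp only [twistedOp_apply, Finset.sum_sub_distrib]
    _ = (2 * I) • (∑ j, ∑ k, A j k • dirDeriv (e j) (coordMul (ω.flip (e k)) φ) +
          ∑ j, ∑ k, A j k • dirDeriv (e j) (coordMul (ω.flip (e k)) φ)) := by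
        simp only [hterm, ← Finset.smul_sum, Finset.sum_sub_distrib, Finset.sum_add_distrib, hswap,
          ← Finset.sum_smul, hzero, zero_smul, sub_zero]
    _ = firstOrderPart A e ω φ := by
        simp only [firstOrderPart_apply, mul_smul, ← Finset.smul_sum]
        module

end SecondOrder

theorem twistedTranslate_neg {ω : E →L[ℝ] E →L[ℝ] ℝ} (hω : ∀ v w, ω w v = -ω v w) (u : E)
    (φ : ComplexTestFunction E) : twistedTranslate ω u (twistedTranslate ω (-u) φ) = φ := by
  ext x
  have hu : ω u u = 0 := self_eq_neg.1 (hω u u)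
  simp [twistedTranslate_apply, ← mul_assoc, ← Complex.exp_add, hu]

section L2

variable [MeasurableSpace E] [BorelSpace E]

theorem integrable {ν : Measure E} [IsFiniteMeasureOnCompacts ν] (φ : ComplexTestFunction E) :
    Integrable φ ν :=
  φ.continuous.integrable_of_hasCompactSupport φ.hasCompactSupport

theorem memLp (ν : Measure E) [IsFiniteMeasureOnCompacts ν] (φ : ComplexTestFunction E) :
    MemLp φ 2 ν :=
  φ.continuous.memLp_of_hasCompactSupport φ.hasCompactSupport

/-- The embedding of the test functions into `L²`. -/
def toL2 (ν : Measure E) [IsFiniteMeasureOnCompacts ν] :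
    ComplexTestFunction E →ₗ[ℂ] Lp ℂ 2 ν where
  toFun φ := (φ.memLp ν).toLp φ
  map_add' φ ψ := MemLp.toLp_add (φ.memLp ν) (ψ.memLp ν)
  map_smul' c φ := MemLp.toLp_const_smul c (φ.memLp ν)

variable {ν : Measure E} [IsFiniteMeasureOnCompacts ν]

theorem inner_toL2_left (φ : ComplexTestFunction E) (f : Lp ℂ 2 ν) :
    inner ℂ (toL2 ν φ) f = ∫ x, f x * conj (φ x) ∂ν := by
  rw [L2.inner_def]
  refine integral_congr_ae ?_
  filter_upwards [(φ.memLp ν).coeFn_toLp] with x hx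
  exact congrArg (fun z => f x * conj z) hx

theorem inner_toL2_toL2 (φ ψ : ComplexTestFunction E) :
    inner ℂ (toL2 ν φ) (toL2 ν ψ) = ∫ x, ψ x * conj (φ x) ∂ν := by
  rw [inner_toL2_left]
  refine integral_congr_ae ?_
  filter_upwards [(ψ.memLp ν).coeFn_toLp] with x hx
  exact congrArg (· * conj (φ x)) hx

theorem denseRange_toL2 [FiniteDimensional ℝ E] : DenseRange (toL2 (E := E) ν) := by
  refine (Lp.dense_hasCompactSupport_contDiff (p := 2) (by simp)).mono ?_
  rintro f ⟨φ, hfφ, hc, hφ⟩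
  exact ⟨ofContDiff φ hφ hc, Lp.ext (((memLp ν _).coeFn_toLp).trans hfφ.symm)⟩

theorem inner_coordMul_left (ℓ : E →L[ℝ] ℝ) (φ ψ : ComplexTestFunction E) :
    inner ℂ (toL2 ν (coordMul ℓ φ)) (toL2 ν ψ) = inner ℂ (toL2 ν φ) (toL2 ν (coordMul ℓ ψ)) := by
  simp only [inner_toL2_toL2, coordMul_apply, map_mul, conj_ofReal]
  exact integral_congr_ae (.of_forall fun x => by ring)

end L2

section Isometry

variable [MeasurableSpace E] [BorelSpace E] {ν : Measure E} [IsFiniteMeasureOnCompacts ν]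
  [ν.IsAddRightInvariant]

theorem inner_twistedTranslate_twistedTranslate (ω : E →L[ℝ] E →L[ℝ] ℝ) (u : E)
    (φ ψ : ComplexTestFunction E) :
    inner ℂ (toL2 ν (twistedTranslate ω u φ)) (toL2 ν (twistedTranslate ω u ψ)) =
      inner ℂ (toL2 ν φ) (toL2 ν ψ) := by
  have hphase (x : E) : Complex.exp (I * ω x u) * conj (Complex.exp (I * ω x u)) = 1 := by
    rw [mul_conj', mul_comm I, norm_exp_ofReal_mul_I]
    simp
  simp only [inner_toL2_toL2, twistedTranslate_apply, map_mul]
  rw [← integral_sub_right_eq_self (fun x => ψ x * conj (φ x)) u]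
  refine integral_congr_ae (.of_forall fun x => ?_)
  linear_combination ψ (x - u) * conj (φ (x - u)) * hphase x

theorem norm_toL2_twistedTranslate (ω : E →L[ℝ] E →L[ℝ] ℝ) (u : E) (φ : ComplexTestFunction E) :
    ‖toL2 ν (twistedTranslate ω u φ)‖ = ‖toL2 ν φ‖ := by
  rw [@norm_eq_sqrt_re_inner ℂ, inner_twistedTranslate_twistedTranslate,
    ← @norm_eq_sqrt_re_inner ℂ]

theorem continuous_toL2_twistedTranslate (ω : E →L[ℝ] E →L[ℝ] ℝ) (φ : ComplexTestFunction E) :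
    Continuous fun u => toL2 ν (twistedTranslate ω u φ) := by
  refine continuous_iff_continuousAt.2 fun v => tendsto_iff_norm_sub_tendsto_zero.2 ?_
  set χ := twistedTranslate ω v φ
  have hinner : Continuous fun u => inner ℂ (toL2 ν χ) (toL2 ν (twistedTranslate ω u φ)) := by
    simp only [inner_toL2_toL2]
    refine continuousOn_univ.1 (continuousOn_integral_of_compact_support χ.hasCompactSupport ?_
      fun u x _ hx => by simp [image_eq_zero_of_notMem_tsupport hx])
    have := continuous_twistedTranslate_apply ω φ
    have := χ.continuous
    fun_prop
  have hsq (u : E) : ‖toL2 ν (twistedTranslate ω u φ) - toL2 ν χ‖ ^ 2 =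
      2 * ‖toL2 ν φ‖ ^ 2 - 2 * (inner ℂ (toL2 ν χ) (toL2 ν (twistedTranslate ω u φ))).re := by
    rw [norm_sub_rev, @norm_sub_sq ℂ, norm_toL2_twistedTranslate, norm_toL2_twistedTranslate]
    simp only [RCLike.re_to_complex]
    ring
  have hnorm : Continuous fun u => ‖toL2 ν (twistedTranslate ω u φ) - toL2 ν χ‖ := by
    refine (Real.continuous_sqrt.comp ?_).congr fun u => Real.sqrt_sq (norm_nonneg _)
    simp only [hsq]
    fun_prop
  simpa [χ] using hnorm.tendsto v

end Isometry

section Haar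

variable [FiniteDimensional ℝ E] [MeasurableSpace E] [BorelSpace E] {ν : Measure E}
  [ν.IsAddHaarMeasure]

theorem integral_dirDeriv (w : E) (φ : ComplexTestFunction E) : ∫ x, dirDeriv w φ x ∂ν = 0 := by
  have hφ' : Integrable (fun x => fderiv ℝ φ x w) ν :=
    (dirDeriv w φ).integrable.congr (.of_forall (dirDeriv_apply w φ))
  have h := integral_mul_fderiv_eq_neg_fderiv_mul_of_integrable (μ := ν) (v := w)
    (f := fun _ => (1 : ℂ)) (g := φ) (by simp) (by simpa using hφ') (by simpa using φ.integrable)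
    (fun _ _ => differentiableAt_const _) fun x _ => φ.differentiable x
  simpa [dirDeriv_apply] using h

theorem inner_dirDeriv_left (w : E) (φ ψ : ComplexTestFunction E) :
    inner ℂ (toL2 ν (dirDeriv w φ)) (toL2 ν ψ) =
      -inner ℂ (toL2 ν φ) (toL2 ν (dirDeriv w ψ)) := by
  have hmul (χ η : ComplexTestFunction E) : Integrable (fun x => χ x * η x) ν :=
    (χ.continuous.mul η.continuous).integrable_of_hasCompactSupport χ.hasCompactSupport.mul_right
  have h := integral_mul_fderiv_eq_neg_fderiv_mul_of_integrable (μ := ν) (v := w)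
    (f := ψ) (g := conjugate φ) (by simpa only [dirDeriv_apply] using hmul (dirDeriv w ψ) _)
    (by simpa only [dirDeriv_apply] using hmul ψ (dirDeriv w (conjugate φ))) (hmul ψ _)
    (fun x _ => ψ.differentiable x) fun x _ => (conjugate φ).differentiable x
  simpa only [← dirDeriv_apply, dirDeriv_conjugate, conjugate_apply, ← inner_toL2_toL2] using h

theorem inner_twistedDeriv_left (ω : E →L[ℝ] E →L[ℝ] ℝ) (w : E) (φ ψ : ComplexTestFunction E) :
    inner ℂ (toL2 ν (twistedDeriv ω w φ)) (toL2 ν ψ) =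
      -inner ℂ (toL2 ν φ) (toL2 ν (twistedDeriv ω w ψ)) := by
  simp [twistedDeriv, inner_add_left, inner_add_right, inner_smul_left, inner_smul_right,
    inner_dirDeriv_left, inner_coordMul_left, add_comm]

theorem inner_twistedOp_left {ι : Type*} [Fintype ι] (A : Matrix ι ι ℂ) (e : ι → E)
    (ω : E →L[ℝ] E →L[ℝ] ℝ) (φ ψ : ComplexTestFunction E) :
    inner ℂ (toL2 ν (twistedOp A e ω φ)) (toL2 ν ψ) =
      inner ℂ (toL2 ν φ) (toL2 ν (twistedOp Aᴴ e ω ψ)) := by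
  simp only [twistedOp_apply, map_sum, map_smul, sum_inner, inner_sum, inner_smul_left,
    inner_smul_right, inner_twistedDeriv_left, neg_neg, conjTranspose_apply]
  exact Finset.sum_comm

theorem integral_firstOrderPart {ι : Type*} [Fintype ι] (A : Matrix ι ι ℂ) (e : ι → E)
    (ω : E →L[ℝ] E →L[ℝ] ℝ) (φ : ComplexTestFunction E) :
    ∫ x, firstOrderPart A e ω φ x ∂ν = 0 := by
  have hterm (j k : ι) (c : ℂ) :
      Integrable (fun x => c • dirDeriv (e j) (coordMul (ω.flip (e k)) φ) x) ν :=
    (dirDeriv _ _).integrable.smul c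
  have hsum (x : E) : firstOrderPart A e ω φ x =
      ∑ j, ∑ k, (4 * I * A j k) • dirDeriv (e j) (coordMul (ω.flip (e k)) φ) x := by
    rw [firstOrderPart_apply, _root_.sum_apply]
    exact Finset.sum_congr rfl fun j _ => by rw [_root_.sum_apply]; rfl
  simp only [hsum]
  rw [integral_finsetSum _ fun j _ => integrable_finsetSum _ fun k _ => hterm j k _]
  refine Finset.sum_eq_zero fun j _ => ?_
  rw [integral_finsetSum _ fun k _ => hterm j k _]
  exact Finset.sum_eq_zero fun k _ => by rw [integral_smul, integral_dirDeriv, smul_zero]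

end Haar

end ComplexTestFunction

section TwistedTranslate

open ComplexTestFunction

variable [FiniteDimensional ℝ E] [MeasurableSpace E] [BorelSpace E] (ν : Measure E)
  [ν.IsAddHaarMeasure]

/-- The twisted translation `f ↦ exp (i ω(·, u)) f(· - u)` on `L²`, obtained by continuity from
test functions. -/
def twistedTranslateL2 (ω : E →L[ℝ] E →L[ℝ] ℝ) (u : E) : Lp ℂ 2 ν →L[ℂ] Lp ℂ 2 ν :=
  (toL2 ν ∘ₗ twistedTranslate ω u).extendOfNorm (toL2 ν)

variable {ν}

@[simp]
theorem twistedTranslateL2_toL2 (ω : E →L[ℝ] E →L[ℝ] ℝ) (u : E) (φ : ComplexTestFunction E) :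
    twistedTranslateL2 ν ω u (toL2 ν φ) = toL2 ν (twistedTranslate ω u φ) :=
  LinearMap.extendOfNorm_eq denseRange_toL2
    ⟨1, fun ψ => by simp [norm_toL2_twistedTranslate]⟩ φ

theorem norm_twistedTranslateL2_le (ω : E →L[ℝ] E →L[ℝ] ℝ) (u : E) :
    ‖twistedTranslateL2 ν ω u‖ ≤ 1 :=
  LinearMap.opNorm_extendOfNorm_le denseRange_toL2 zero_le_one
    fun ψ => by simp [norm_toL2_twistedTranslate]

theorem norm_twistedTranslateL2_apply_le (ω : E →L[ℝ] E →L[ℝ] ℝ) (u : E) (f : Lp ℂ 2 ν) :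
    ‖twistedTranslateL2 ν ω u f‖ ≤ ‖f‖ :=
  (twistedTranslateL2 ν ω u).le_of_opNorm_le (norm_twistedTranslateL2_le ω u) f |>.trans_eq
    (one_mul _)

theorem twistedTranslateL2_zero (ω : E →L[ℝ] E →L[ℝ] ℝ) (f : Lp ℂ 2 ν) :
    twistedTranslateL2 ν ω 0 f = f := by
  refine congrFun (denseRange_toL2.equalizer (twistedTranslateL2 ν ω 0).continuous continuous_id
    (funext fun φ => ?_)) f
  rw [Function.comp_apply, twistedTranslateL2_toL2]
  congr 1
  ext x
  simp [twistedTranslate_apply]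

theorem inner_twistedTranslateL2_neg_left {ω : E →L[ℝ] E →L[ℝ] ℝ} (hω : ∀ v w, ω w v = -ω v w)
    (u : E) (f g : Lp ℂ 2 ν) :
    inner ℂ (twistedTranslateL2 ν ω (-u) f) g = inner ℂ f (twistedTranslateL2 ν ω u g) := by
  refine denseRange_toL2.induction_on f (isClosed_eq (by fun_prop) (by fun_prop)) fun φ => ?_
  refine denseRange_toL2.induction_on g (isClosed_eq (by fun_prop) (by fun_prop)) fun ψ => ?_
  rw [twistedTranslateL2_toL2, twistedTranslateL2_toL2,
    ← inner_twistedTranslate_twistedTranslate ω u, twistedTranslate_neg hω]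

theorem continuous_twistedTranslateL2_apply (ω : E →L[ℝ] E →L[ℝ] ℝ) (f : Lp ℂ 2 ν) :
    Continuous fun u => twistedTranslateL2 ν ω u f := by
  refine continuous_iff_continuousAt.2 fun v => tendsto_apply_of_tendsto_on_dense
    (.of_forall fun u => norm_twistedTranslateL2_le ω u) denseRange_toL2 ?_ f
  rintro _ ⟨φ, rfl⟩
  simpa using (continuous_toL2_twistedTranslate (ν := ν) ω φ).tendsto v

end TwistedTranslate

/-! ### Twisted convolution and the maximal operator on `L²` -/

section MaximalGraph

open ComplexTestFunction

variable {ι : Type*} [Fintype ι] [MeasurableSpace E] [BorelSpace E] (ν : Measure E)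
  [IsFiniteMeasureOnCompacts ν]

/-- The graph in `L² × L²` of `∑ j k, a_jk V_j V_k` acting on test functions. -/
def testGraph (A : Matrix ι ι ℂ) (e : ι → E) (ω : E →L[ℝ] E →L[ℝ] ℝ) :
    Submodule ℂ (Lp ℂ 2 ν × Lp ℂ 2 ν) :=
  LinearMap.range ((toL2 ν).prod (toL2 ν ∘ₗ twistedOp A e ω))

/-- The graph of the maximal operator `∑ j k, a_jk V_j V_k` on `L²`, defined as the adjoint of the
formal adjoint `∑ j k, conj a_kj V_j V_k` on test functions. -/
def maximalGraph (A : Matrix ι ι ℂ) (e : ι → E) (ω : E →L[ℝ] E →L[ℝ] ℝ) :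
    Submodule ℂ (Lp ℂ 2 ν × Lp ℂ 2 ν) :=
  (testGraph ν Aᴴ e ω).adjoint

variable {ν} {A : Matrix ι ι ℂ} {e : ι → E} {ω : E →L[ℝ] E →L[ℝ] ℝ}

theorem mem_maximalGraph_iff_inner {f g : Lp ℂ 2 ν} :
    (f, g) ∈ maximalGraph ν A e ω ↔
      ∀ φ, inner ℂ (toL2 ν (twistedOp Aᴴ e ω φ)) f = inner ℂ (toL2 ν φ) g := by
  simp only [maximalGraph, testGraph, Submodule.mem_adjoint_iff, LinearMap.mem_range, sub_eq_zero]
  constructor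
  · exact fun h φ => h _ _ ⟨φ, rfl⟩
  · rintro h _ _ ⟨φ, ⟨⟩⟩
    exact h φ

theorem mem_maximalGraph_iff {f g : Lp ℂ 2 ν} :
    (f, g) ∈ maximalGraph ν A e ω ↔
      ∀ φ, ∫ x, f x * twistedOp Aᵀ e (-ω) φ x ∂ν = ∫ x, g x * φ x ∂ν := by
  have hconj : Function.Surjective (conjugate (E := E)) :=
    fun φ => ⟨conjugate φ, conjugate_conjugate φ⟩
  have hA : Aᵀ.map conj = Aᴴ := rfl
  have hneg : - -ω = ω := neg_neg ω
  rw [mem_maximalGraph_iff_inner]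
  refine Iff.trans ?_ (hconj.forall).symm
  simp only [inner_toL2_left, twistedOp_conjugate, conjugate_apply, hA, hneg]

end MaximalGraph

section TwistedConvolution

open ComplexTestFunction

variable [FiniteDimensional ℝ E] [MeasurableSpace E] [BorelSpace E] {ν : Measure E}
  [ν.IsAddHaarMeasure] {ω : E →L[ℝ] E →L[ℝ] ℝ}

theorem integrable_smul_twistedTranslateL2 (ω : E →L[ℝ] E →L[ℝ] ℝ) (ψ : ComplexTestFunction E)
    (f : Lp ℂ 2 ν) : Integrable (fun u => ψ u • twistedTranslateL2 ν ω u f) ν :=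
  (ψ.continuous.smul (continuous_twistedTranslateL2_apply ω f)).integrable_of_hasCompactSupport
    ψ.hasCompactSupport.smul_right

theorem norm_integral_smul_twistedTranslateL2_le (ω : E →L[ℝ] E →L[ℝ] ℝ)
    (ψ : ComplexTestFunction E) (f : Lp ℂ 2 ν) :
    ‖∫ u, ψ u • twistedTranslateL2 ν ω u f ∂ν‖ ≤ (∫ u, ‖ψ u‖ ∂ν) * ‖f‖ := by
  rw [← integral_mul_const]
  refine norm_integral_le_of_norm_le (ψ.integrable.norm.mul_const _) (.of_forall fun u => ?_)
  rw [norm_smul]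
  gcongr
  exact norm_twistedTranslateL2_apply_le ω u f

variable (ν) in
/-- The twisted convolution operator `f ↦ ∫ ψ(u) U_u f du` on `L²`, where `U_u` is the twisted
translation. -/
def twistedConv (ω : E →L[ℝ] E →L[ℝ] ℝ) :
    ComplexTestFunction E →ₗ[ℂ] Lp ℂ 2 ν →L[ℂ] Lp ℂ 2 ν where
  toFun ψ := LinearMap.mkContinuous
    { toFun f := ∫ u, ψ u • twistedTranslateL2 ν ω u f ∂ν
      map_add' f g := by
        simp only [map_add, smul_add]
        exact integral_add (integrable_smul_twistedTranslateL2 ω ψ f)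
          (integrable_smul_twistedTranslateL2 ω ψ g)
      map_smul' c f := by
        simp only [map_smul, smul_comm _ c, integral_smul, RingHom.id_apply] }
    (∫ u, ‖ψ u‖ ∂ν) (norm_integral_smul_twistedTranslateL2_le ω ψ)
  map_add' φ ψ := by
    ext1 f
    simpa [add_smul] using integral_add (integrable_smul_twistedTranslateL2 ω φ f)
      (integrable_smul_twistedTranslateL2 ω ψ f)
  map_smul' c ψ := by
    ext1 f
    simpa [mul_smul] using integral_smul c fun u => ψ u • twistedTranslateL2 ν ω u f

theorem twistedConv_apply (ω : E →L[ℝ] E →L[ℝ] ℝ) (ψ : ComplexTestFunction E) (f : Lp ℂ 2 ν) :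
    twistedConv ν ω ψ f = ∫ u, ψ u • twistedTranslateL2 ν ω u f ∂ν := rfl

theorem inner_twistedConv_right (ω : E →L[ℝ] E →L[ℝ] ℝ) (ψ : ComplexTestFunction E)
    (f h : Lp ℂ 2 ν) :
    inner ℂ h (twistedConv ν ω ψ f) = ∫ u, ψ u * inner ℂ h (twistedTranslateL2 ν ω u f) ∂ν := by
  simp only [twistedConv_apply, ← integral_inner (integrable_smul_twistedTranslateL2 ω ψ f) h,
    inner_smul_right]

theorem inner_twistedConv_left (hω : ∀ v w, ω w v = -ω v w) (ψ : ComplexTestFunction E)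
    (f h : Lp ℂ 2 ν) :
    inner ℂ (twistedConv ν ω ψ f) h = inner ℂ f (twistedConv ν ω (involution ψ) h) := by
  rw [← inner_conj_symm, inner_twistedConv_right, inner_twistedConv_right, ← integral_conj,
    ← integral_neg_eq_self]
  simp [involution_apply, inner_conj_symm, inner_twistedTranslateL2_neg_left hω]

theorem inner_toL2_twistedConv_toL2 (ω : E →L[ℝ] E →L[ℝ] ℝ) (χ φ ψ : ComplexTestFunction E) :
    inner ℂ (toL2 ν χ) (twistedConv ν ω φ (toL2 ν ψ)) =
      ∫ x, ∫ u, φ u * (Complex.exp (I * ω x u) * ψ (x - u) * conj (χ x)) ∂ν ∂ν := by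
  simp only [inner_twistedConv_right, twistedTranslateL2_toL2, inner_toL2_toL2,
    twistedTranslate_apply, ← integral_const_mul]
  refine integral_integral_swap_of_hasCompactSupport ?_ ?_
  · have := φ.continuous
    have := ψ.continuous
    have := χ.continuous
    unfold Function.uncurry
    fun_prop
  · refine HasCompactSupport.intro (φ.hasCompactSupport.isCompact.prod
      χ.hasCompactSupport.isCompact) fun ⟨u, x⟩ hux => ?_
    rw [Set.mem_prod, not_and_or] at hux
    rcases hux with hu | hx
    · simp [image_eq_zero_of_notMem_tsupport hu]
    · simp [image_eq_zero_of_notMem_tsupport hx]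

theorem twistedConv_neg_toL2 (hω : ∀ v w, ω w v = -ω v w) (φ ψ : ComplexTestFunction E) :
    twistedConv ν (-ω) ψ (toL2 ν φ) = twistedConv ν ω φ (toL2 ν ψ) := by
  refine denseRange_toL2.eq_of_inner_right ℂ fun χ => ?_
  rw [inner_toL2_twistedConv_toL2, inner_toL2_twistedConv_toL2]
  refine integral_congr_ae (.of_forall fun x => ?_)
  have hx : ω x x = 0 := self_eq_neg.1 (hω x x)
  refine (integral_sub_left_eq_self _ ν x).symm.trans
    (integral_congr_ae (.of_forall fun u => ?_))
  simp [hx]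
  ring

theorem twistedConv_dilate (ω : E →L[ℝ] E →L[ℝ] ℝ) (ε : ℝˣ) (ψ : ComplexTestFunction E)
    (f : Lp ℂ 2 ν) :
    twistedConv ν ω (dilate ε ψ) f = ∫ v, ψ v • twistedTranslateL2 ν ω ((ε : ℝ) • v) f ∂ν := by
  have hε : (ε : ℝ) ≠ 0 := ε.ne_zero
  have hd : (ε : ℝ) ^ Module.finrank ℝ E ≠ 0 := pow_ne_zero _ hε
  have h := Measure.integral_comp_inv_smul ν
    (fun v => ψ v • twistedTranslateL2 ν ω ((ε : ℝ) • v) f) (ε : ℝ)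
  simp only [smul_inv_smul₀ hε] at h
  rw [← inv_smul_smul₀ (abs_ne_zero.2 hd) (∫ v, ψ v • twistedTranslateL2 ν ω ((ε : ℝ) • v) f ∂ν),
    ← h, twistedConv_apply, ← integral_smul]
  simp only [dilate_apply, smul_assoc, abs_inv]

theorem tendsto_twistedConv_dilate (ω : E →L[ℝ] E →L[ℝ] ℝ) {ι : Type*} {l : Filter ι}
    [l.IsCountablyGenerated] {ε : ι → ℝˣ} (hε : Tendsto (fun i => (ε i : ℝ)) l (𝓝 0))
    (ψ : ComplexTestFunction E) (f : Lp ℂ 2 ν) :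
    Tendsto (fun i => twistedConv ν ω (dilate (ε i) ψ) f) l (𝓝 ((∫ u, ψ u ∂ν) • f)) := by
  have hU := continuous_twistedTranslateL2_apply (ν := ν) ω f
  simp only [twistedConv_dilate, ← integral_smul_const]
  refine tendsto_integral_filter_of_dominated_convergence (fun v => ‖ψ v‖ * ‖f‖)
    (.of_forall fun i => ?_) (.of_forall fun i => .of_forall fun v => ?_)
    (ψ.integrable.norm.mul_const _) (.of_forall fun v => ?_)
  · exact (ψ.continuous.smul (hU.comp (continuous_const_smul _))).aestronglyMeasurable
  · rw [norm_smul]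
    gcongr
    exact norm_twistedTranslateL2_apply_le ω _ f
  · have hv : Tendsto (fun i => (ε i : ℝ) • v) l (𝓝 0) := by
      simpa using hε.smul_const v
    simpa [Function.comp_def, twistedTranslateL2_zero] using
      ((hU.tendsto 0).comp hv).const_smul (ψ v)

theorem inner_twistedConv_toL2_of_commute {P : ComplexTestFunction E → ComplexTestFunction E}
    (hP : ∀ u ψ, P (twistedTranslate ω u ψ) = twistedTranslate ω u (P ψ)) {h h' : Lp ℂ 2 ν}
    (hh : ∀ ψ, inner ℂ h (toL2 ν (P ψ)) = inner ℂ h' (toL2 ν ψ)) (φ ψ : ComplexTestFunction E) :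
    inner ℂ h (twistedConv ν ω φ (toL2 ν (P ψ))) = inner ℂ h' (twistedConv ν ω φ (toL2 ν ψ)) := by
  simp only [inner_twistedConv_right, twistedTranslateL2_toL2, ← hP, hh]

theorem inner_twistedConv_toL2_twistedDeriv (hω : ∀ v w, ω w v = -ω v w) (w : E)
    (φ χ ψ : ComplexTestFunction E) :
    inner ℂ (twistedConv ν ω φ (toL2 ν χ)) (twistedConv ν ω φ (toL2 ν (twistedDeriv ω w ψ))) =
      -inner ℂ (twistedConv ν ω φ (toL2 ν (twistedDeriv ω w χ)))
        (twistedConv ν ω φ (toL2 ν ψ)) := by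
  have hcomm := twistedDeriv_twistedTranslate hω w
  have hweak (η : ComplexTestFunction E) :
      inner ℂ (toL2 ν η) (twistedConv ν ω φ (toL2 ν (twistedDeriv ω w χ))) =
        -inner ℂ (toL2 ν (twistedDeriv ω w η)) (twistedConv ν ω φ (toL2 ν χ)) := by
    rw [← inner_neg_left]
    refine inner_twistedConv_toL2_of_commute hcomm (fun ψ => ?_) φ χ
    rw [inner_neg_left, inner_twistedDeriv_left, neg_neg]
  rw [← inner_neg_left]
  refine inner_twistedConv_toL2_of_commute hcomm (fun η => ?_) φ ψ
  rw [inner_neg_left, ← inner_conj_symm, ← inner_conj_symm _ (toL2 ν η), hweak, map_neg, neg_neg]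

theorem inner_twistedConv_twistedDeriv (hω : ∀ v w, ω w v = -ω v w) (w : E)
    (χ ψ : ComplexTestFunction E) (f : Lp ℂ 2 ν) :
    inner ℂ (twistedConv ν (-ω) χ f) (twistedConv ν (-ω) (twistedDeriv ω w ψ) f) =
      -inner ℂ (twistedConv ν (-ω) (twistedDeriv ω w χ) f) (twistedConv ν (-ω) ψ f) := by
  refine denseRange_toL2.induction_on f (isClosed_eq (by fun_prop) (by fun_prop)) fun φ => ?_
  simp only [twistedConv_neg_toL2 hω, inner_twistedConv_toL2_twistedDeriv hω]

variable {ι : Type*} [Fintype ι] {A : Matrix ι ι ℂ} {e : ι → E}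

theorem twistedConv_twistedOp_of_mem_maximalGraph (hω : ∀ v w, ω w v = -ω v w) (hA : A.IsSymm)
    {f g : Lp ℂ 2 ν} (h : (f, g) ∈ maximalGraph ν A e ω) (ψ : ComplexTestFunction E) :
    twistedConv ν (-ω) (twistedOp A e (-ω) ψ) f = twistedConv ν (-ω) ψ g := by
  have hω' (v w : E) : (-ω) w v = -(-ω) v w := by simp [hω v w]
  have hAH : Aᴴ.map conj = A := by
    ext j k
    simp [hA.apply]
  have hweak (φ : ComplexTestFunction E) :
      inner ℂ f (toL2 ν (twistedOp Aᴴ e ω φ)) = inner ℂ g (toL2 ν φ) := by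
    rw [← inner_conj_symm, mem_maximalGraph_iff_inner.1 h, inner_conj_symm]
  refine denseRange_toL2.eq_of_inner_left ℂ fun χ => ?_
  calc inner ℂ (twistedConv ν (-ω) (twistedOp A e (-ω) ψ) f) (toL2 ν χ)
      = inner ℂ f (twistedConv ν ω χ (toL2 ν (twistedOp Aᴴ e ω (involution ψ)))) := by
        rw [inner_twistedConv_left hω', twistedConv_neg_toL2 hω, twistedOp_involution, hAH]
    _ = inner ℂ g (twistedConv ν ω χ (toL2 ν (involution ψ))) :=
        inner_twistedConv_toL2_of_commute (twistedOp_twistedTranslate hω Aᴴ e) hweak χ _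
    _ = inner ℂ (twistedConv ν (-ω) ψ g) (toL2 ν χ) := by
        rw [inner_twistedConv_left hω', twistedConv_neg_toL2 hω]

theorem re_inner_twistedConv_twistedOp_nonpos (hω : ∀ v w, ω w v = -ω v w) (hA : A.IsSymm)
    (hpos : (A.map Complex.re).PosSemidef) (ψ : ComplexTestFunction E) (f : Lp ℂ 2 ν) :
    (inner ℂ (twistedConv ν (-ω) ψ f) (twistedConv ν (-ω) (twistedOp A e ω ψ) f)).re ≤ 0 := by
  have h := re_sum_mul_inner_nonneg hA hpos
    fun j => twistedConv ν (-ω) (twistedDeriv ω (e j) ψ) f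
  simpa [twistedOp_apply, _root_.sum_apply, inner_sum, inner_smul_right,
    inner_twistedConv_twistedDeriv hω] using h

theorem exists_integral_eq_one : ∃ ψ : ComplexTestFunction E, ∫ x, ψ x ∂ν = 1 := by
  let b : ContDiffBump (0 : E) := default
  refine ⟨ofContDiff (fun x => (b.normed ν x : ℂ)) ?_ ?_, ?_⟩
  · exact ofRealCLM.contDiff.comp b.contDiff_normed
  · exact b.hasCompactSupport_normed.comp_left ofReal_zero
  · exact (integral_ofReal (f := b.normed ν)).trans (by rw [b.integral_normed, RCLike.ofReal_one])

theorem re_inner_nonpos_of_mem_maximalGraph (hω : ∀ v w, ω w v = -ω v w) (hA : A.IsSymm)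
    (hpos : (A.map Complex.re).PosSemidef) {f g : Lp ℂ 2 ν}
    (h : (f, g) ∈ maximalGraph ν A e ω) : (inner ℂ f g).re ≤ 0 := by
  obtain ⟨ψ, hψ⟩ := exists_integral_eq_one (ν := ν)
  let ε (k : ℕ) : ℝˣ := Units.mk0 (1 / (k + 1)) Nat.one_div_pos_of_nat.ne'
  have hε : Tendsto (fun k => (ε k : ℝ)) atTop (𝓝 0) := tendsto_one_div_add_atTop_nhds_zero_nat
  have hsplit (k : ℕ) : twistedConv ν (-ω) (twistedOp A e ω (dilate (ε k) ψ)) f =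
      twistedConv ν (-ω) (dilate (ε k) (firstOrderPart A e ω ψ)) f +
        twistedConv ν (-ω) (dilate (ε k) ψ) g := by
    rw [← twistedConv_twistedOp_of_mem_maximalGraph hω hA h, ← firstOrderPart_dilate,
      ← twistedOp_sub_twistedOp_neg hA e hω, map_sub, _root_.sub_apply, sub_add_cancel]
  have hleft : Tendsto (fun k => twistedConv ν (-ω) (dilate (ε k) ψ) f) atTop (𝓝 f) := by
    simpa [hψ] using tendsto_twistedConv_dilate (-ω) hε ψ f
  have hright : Tendsto (fun k => twistedConv ν (-ω) (twistedOp A e ω (dilate (ε k) ψ)) f)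
      atTop (𝓝 g) := by
    simpa [hsplit, hψ, integral_firstOrderPart] using
      (tendsto_twistedConv_dilate (-ω) hε (firstOrderPart A e ω ψ) f).add
        (tendsto_twistedConv_dilate (-ω) hε ψ g)
  exact le_of_tendsto' ((continuous_re.tendsto _).comp (hleft.inner hright)) fun k =>
    re_inner_twistedConv_twistedOp_nonpos hω hA hpos _ f

theorem testGraph_le_maximalGraph : testGraph ν A e ω ≤ maximalGraph ν A e ω := by
  rintro _ ⟨φ, rfl⟩
  refine mem_maximalGraph_iff_inner.2 fun ψ => ?_
  simpa using inner_twistedOp_left Aᴴ e ω ψ φ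

theorem adjoint_maximalGraph_le : (maximalGraph ν A e ω).adjoint ≤ maximalGraph ν Aᴴ e ω := by
  intro z hz
  rw [maximalGraph, conjTranspose_conjTranspose, Submodule.mem_adjoint_iff]
  exact fun a b hab => (Submodule.mem_adjoint_iff _ z).1 hz a b (testGraph_le_maximalGraph hab)

theorem isMDissipative_maximalGraph (hω : ∀ v w, ω w v = -ω v w) (hA : A.IsSymm)
    (hpos : (A.map Complex.re).PosSemidef) : IsMDissipative (maximalGraph ν A e ω) := by
  have hAH : Aᴴ.map Complex.re = A.map Complex.re := by
    rw [conjTranspose, hA.eq]; rfl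
  refine isMDissipative_of_re_inner_nonpos isClosed_adjoint (fun g hg => ?_)
    (fun z hz => re_inner_nonpos_of_mem_maximalGraph hω hA hpos hz) fun z hz =>
    re_inner_nonpos_of_mem_maximalGraph hω hA.conjTranspose (by rwa [hAH])
      (adjoint_maximalGraph_le hz)
  refine denseRange_toL2.eq_zero_of_inner_right ℂ fun φ => ?_
  rw [← mem_maximalGraph_iff_inner.1 hg, inner_zero_right]

end TwistedConvolution

end TwistedOperators

/-! ### The plane `ℝ^{2n}` -/

/-- The form `((x, y), (x', y')) ↦ c (⟨x, y'⟩ - ⟨y, x'⟩)`. For `c = πμ` its twisted derivatives in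
the coordinate directions are the vector fields `Ṽ_j^μ`. -/
def symplecticForm (n : ℕ) (c : ℝ) : Pl n →L[ℝ] Pl n →L[ℝ] ℝ :=
  let x (j : Fin n) : Pl n →L[ℝ] ℝ := .proj j ∘L .fst ℝ _ _
  let y (j : Fin n) : Pl n →L[ℝ] ℝ := .proj j ∘L .snd ℝ _ _
  c • ∑ j, ((x j).smulRight (y j) - (y j).smulRight (x j))

theorem symplecticForm_apply (n : ℕ) (c : ℝ) (p q : Pl n) :
    symplecticForm n c p q = c * ∑ j, (p.1 j * q.2 j - p.2 j * q.1 j) := by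
  simp [symplecticForm, _root_.sum_apply]

theorem symplecticForm_swap (n : ℕ) (c : ℝ) (p q : Pl n) :
    symplecticForm n c q p = -symplecticForm n c p q := by
  simp only [symplecticForm_apply, ← mul_neg, ← Finset.sum_neg_distrib, neg_sub, mul_comm (q.1 _),
    mul_comm (q.2 _)]

theorem symplecticForm_neg (n : ℕ) (c : ℝ) : symplecticForm n (-c) = -symplecticForm n c := by
  refine ContinuousLinearMap.ext fun p => ContinuousLinearMap.ext fun q => ?_
  simp [symplecticForm_apply]

/-- The standard basis of `ℝ^n × ℝ^n`. -/
def coordVec (n : ℕ) : Idx n → Pl n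
  | Sum.inl j => (Pi.single j 1, 0)
  | Sum.inr j => (0, Pi.single j 1)

theorem tVop_eq_twistedDeriv (n : ℕ) (μ : ℝ) (j : Idx n) (φ : ComplexTestFunction (Pl n)) :
    tVop n μ j φ = ComplexTestFunction.twistedDeriv (symplecticForm n (Real.pi * μ)) (coordVec n j)
      φ := by
  ext p
  cases j <;>
  · simp [tVop, coordVec, ComplexTestFunction.twistedDeriv_apply, symplecticForm_apply,
      Pi.single_apply, -mul_eq_mul_right_iff]
    ring

theorem tLop_eq_twistedOp (n : ℕ) (A : Matrix (Idx n) (Idx n) ℂ) (μ : ℝ)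
    (φ : ComplexTestFunction (Pl n)) :
    tLop n A μ φ =
      ComplexTestFunction.twistedOp A (coordVec n) (symplecticForm n (Real.pi * μ)) φ := by
  ext p
  simp [tLop, ComplexTestFunction.twistedOp_apply, tVop_eq_twistedDeriv, _root_.sum_apply]

theorem weakTL_iff_mem_maximalGraph {n : ℕ} {A : Matrix (Idx n) (Idx n) ℂ} (hA : A.IsSymm) (μ : ℝ)
    (f g : Lp ℂ 2 (volume : Measure (Pl n))) :
    WeakTL n A μ f g ↔
      (f, g) ∈ maximalGraph volume A (coordVec n) (symplecticForm n (Real.pi * μ)) := by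
  rw [mem_maximalGraph_iff, hA.eq, ← symplecticForm_neg, ← mul_neg]
  simp only [← tLop_eq_twistedOp]
  exact ⟨fun h φ => h φ φ.contDiff φ.hasCompactSupport,
    fun h φ hφ hc => h (ComplexTestFunction.ofContDiff φ hφ hc)⟩

theorem posSemidef_map_re_of_rePosQ {n : ℕ} {A : Matrix (Idx n) (Idx n) ℂ} (hA : A.IsSymm)
    (h : RePosQ n (-(A * Jmat n))) : (A.map Complex.re).PosSemidef := by
  refine .of_dotProduct_mulVec_nonneg ?_ fun u => ?_
  · ext j k
    simp [hA.apply]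
  let v : Idx n → ℝ := Sum.elim (-u ∘ Sum.inr) (u ∘ Sum.inl)
  have hJv : Jmat n *ᵥ realVec n v = realVec n u := by
    ext i
    cases i <;> simp [Jmat, mulVec, dotProduct, realVec, v, Matrix.one_apply]
  have hvJ : realVec n v ᵥ* Jmat n = -realVec n u := by
    ext i
    cases i <;> simp [Jmat, vecMul, dotProduct, realVec, v, Matrix.one_apply]
  have hv := h v
  rw [sigmaC, neg_mulVec, ← mulVec_mulVec, hJv, dotProduct_mulVec, hvJ, neg_dotProduct_neg] at hv
  simpa [dotProduct, mulVec, realVec] using hv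

instance isAddHaarMeasure_volume_pl (n : ℕ) : (volume : Measure (Pl n)).IsAddHaarMeasure := by
  rw [Measure.volume_eq_prod]
  exact Measure.prod.instIsAddHaarMeasure _ _

theorem statement12_general {E ι : Type*} [NormedAddCommGroup E] [NormedSpace ℝ E]
    [FiniteDimensional ℝ E] [MeasurableSpace E] [BorelSpace E] [Fintype ι] (ν : Measure E)
    [ν.IsAddHaarMeasure] {A : Matrix ι ι ℂ} (hA : A.IsSymm) (hpos : (A.map Complex.re).PosSemidef)
    (e : ι → E) {ω : E →L[ℝ] E →L[ℝ] ℝ} (hω : ∀ v w, ω w v = -ω v w) :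
    (∀ f g, (f, g) ∈ maximalGraph ν A e ω → (inner ℂ f g).re ≤ 0) ∧
      (∀ f g, (f, g) ∈ maximalGraph ν (A.map conj) e ω → (inner ℂ f g).re ≤ 0) ∧
      ∃ T, IsContractionSemigroup T ∧ HasGenerator T (maximalGraph ν A e ω) := by
  have hpos' : ((A.map conj).map Complex.re).PosSemidef := by
    simpa [Function.comp_def] using hpos
  have hG := isMDissipative_maximalGraph (ν := ν) (e := e) hω hA hpos
  exact ⟨fun f g => re_inner_nonpos_of_mem_maximalGraph hω hA hpos,
    fun f g => re_inner_nonpos_of_mem_maximalGraph hω (hA.map conj) hpos',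
    hG.semigroup, hG.isContractionSemigroup_semigroup, hG.hasGenerator_semigroup⟩

/-- for `μ ≠ 0` and `Re Q_S ≥ 0` (`S = -AJ`), the maximal operator
`L̃^μ_S` on `L²(ℝ^{2n})` and its adjoint `L̃^μ_{S̄}` are dissipative, and `L̃^μ_S`
generates a contraction semigroup `T(t) = exp(t L̃^μ_S)`, `t ≥ 0`, on `L²(ℝ^{2n})`:
`T` satisfies the semigroup law, `‖T(t)‖ ≤ 1`, is strongly continuous, and its
infinitesimal generator is exactly the maximal operator `L̃^μ_S`. -/
theorem statement12 (n : ℕ) (A : Matrix (Idx n) (Idx n) ℂ) (hA : Aᵀ = A)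
    (μ : ℝ) (hμ : μ ≠ 0) (hpos : RePosQ n (-(A * Jmat n))) :
    (∀ f g : Lp ℂ 2 (volume : Measure (Pl n)), WeakTL n A μ ⇑f ⇑g →
        (∫ x, g x * (starRingEnd ℂ) (f x)).re ≤ 0) ∧
    (∀ f g : Lp ℂ 2 (volume : Measure (Pl n)),
        WeakTL n (A.map (starRingEnd ℂ)) μ ⇑f ⇑g →
        (∫ x, g x * (starRingEnd ℂ) (f x)).re ≤ 0) ∧
    ∃ T : ℝ → Lp ℂ 2 (volume : Measure (Pl n)) →L[ℂ] Lp ℂ 2 (volume : Measure (Pl n)),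
      T 0 = ContinuousLinearMap.id ℂ _ ∧
      (∀ s t : ℝ, 0 ≤ s → 0 ≤ t → T (s + t) = (T s).comp (T t)) ∧
      (∀ t : ℝ, 0 ≤ t → ‖T t‖ ≤ 1) ∧
      (∀ f : Lp ℂ 2 (volume : Measure (Pl n)), ContinuousOn (fun t => T t f) (Set.Ici 0)) ∧
      (∀ f g : Lp ℂ 2 (volume : Measure (Pl n)),
        WeakTL n A μ ⇑f ⇑g ↔
          Filter.Tendsto (fun t : ℝ => (t⁻¹ : ℝ) • (T t f - f))
            (nhdsWithin 0 (Set.Ioi 0)) (nhds g)) := by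
  obtain ⟨hdiss, hdiss_conj, T, hT, hgen⟩ := statement12_general volume hA
    (posSemidef_map_re_of_rePosQ hA hpos) (coordVec n) (symplecticForm_swap n (Real.pi * μ))
  have hAconj : (A.map (starRingEnd ℂ)).IsSymm := IsSymm.map (A := A) hA _
  simp only [L2.inner_def] at hdiss hdiss_conj
  simp only [weakTL_iff_mem_maximalGraph hA, weakTL_iff_mem_maximalGraph hAconj]
  exact ⟨hdiss, hdiss_conj, T, hT.map_zero, hT.map_add, hT.norm_le_one, hT.continuousOn, hgen⟩
end
end
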